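/- arXiv:math/0212290 — 3 statements merged into one kernel-verified Lean document; each statement's English description precedes it below -/
import Mathlib

section
/- H is a finitely generated module over its center Z(H). -/
/-- The defining relations of the affine Hecke algebra of type `A_2` (for `Gl_3`),
on the free algebra on four generators `T = X 0`, `T⁻¹ = X 1`, `S_1 = X 2`, `S_2 = X 3`. -/
inductive HeckeRel (R : Type) [CommRing R] (q : R) :
    FreeAlgebra R (Fin 4) → FreeAlgebra R (Fin 4) → Prop
  | TTinv : HeckeRel R q (FreeAlgebra.ι R 0 * FreeAlgebra.ι R 1) 1
  | TinvT : HeckeRel R q (FreeAlgebra.ι R 1 * FreeAlgebra.ι R 0) 1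
  | quad : HeckeRel R q
      ((FreeAlgebra.ι R 2 + 1) * (FreeAlgebra.ι R 2 - algebraMap R (FreeAlgebra R (Fin 4)) q)) 0
  | T3S1 : HeckeRel R q (FreeAlgebra.ι R 0 ^ 3 * FreeAlgebra.ι R 2)
      (FreeAlgebra.ι R 2 * FreeAlgebra.ι R 0 ^ 3)
  | braid : HeckeRel R q (FreeAlgebra.ι R 2 * FreeAlgebra.ι R 3 * FreeAlgebra.ι R 2)
      (FreeAlgebra.ι R 3 * FreeAlgebra.ι R 2 * FreeAlgebra.ι R 3)
  | TS2 : HeckeRel R q (FreeAlgebra.ι R 0 * FreeAlgebra.ι R 3)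
      (FreeAlgebra.ι R 2 * FreeAlgebra.ι R 0)

/-- The affine Hecke algebra `H_R` with parameter `q ∈ R`. -/
abbrev HeckeAlg (R : Type) [CommRing R] (q : R) := RingQuot (HeckeRel R q)

namespace HeckeAlg

variable (R : Type) [CommRing R] (q : R)

noncomputable def gen (i : Fin 4) : HeckeAlg R q :=
  RingQuot.mkAlgHom R (HeckeRel R q) (FreeAlgebra.ι R i)

noncomputable def T : HeckeAlg R q := gen R q 0
noncomputable def Tinv : HeckeAlg R q := gen R q 1
noncomputable def S1 : HeckeAlg R q := gen R q 2
noncomputable def S2 : HeckeAlg R q := gen R q 3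

theorem T_mul_Tinv : T R q * Tinv R q = 1 := by
  simpa [T, Tinv, gen, map_mul, map_one] using
    RingQuot.mkAlgHom_rel R (HeckeRel.TTinv (R := R) (q := q))

theorem Tinv_mul_T : Tinv R q * T R q = 1 := by
  simpa [T, Tinv, gen, map_mul, map_one] using
    RingQuot.mkAlgHom_rel R (HeckeRel.TinvT (R := R) (q := q))

theorem quad_rel : (S1 R q + 1) * (S1 R q - algebraMap R (HeckeAlg R q) q) = 0 := by
  simpa [S1, gen, map_mul, map_add, map_sub, map_one, map_zero, AlgHom.commutes] using
    RingQuot.mkAlgHom_rel R (HeckeRel.quad (R := R) (q := q))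

theorem T3_mul_S1 : T R q ^ 3 * S1 R q = S1 R q * T R q ^ 3 := by
  simpa [T, S1, gen, map_mul, map_pow] using
    RingQuot.mkAlgHom_rel R (HeckeRel.T3S1 (R := R) (q := q))

theorem braid_rel : S1 R q * S2 R q * S1 R q = S2 R q * S1 R q * S2 R q := by
  simpa [S1, S2, gen, map_mul] using
    RingQuot.mkAlgHom_rel R (HeckeRel.braid (R := R) (q := q))

theorem T_mul_S2 : T R q * S2 R q = S1 R q * T R q := by
  simpa [T, S1, S2, gen, map_mul] using
    RingQuot.mkAlgHom_rel R (HeckeRel.TS2 (R := R) (q := q))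

/-- The canonical (base change) ring homomorphism `H_R → H_S` induced by a ring
homomorphism `R → S` sending the parameter `q` to the parameter `q'`. -/
noncomputable def map {R S : Type} [CommRing R] [CommRing S] (f : R →+* S) (q : R) (q' : S)
    (h : f q = q') : HeckeAlg R q →+* HeckeAlg S q' := by
  subst h
  letI : Algebra R (HeckeAlg S (f q)) :=
    RingHom.toAlgebra' ((algebraMap S (HeckeAlg S (f q))).comp f)
      (fun c x => by simpa using Algebra.commutes (f c) x)
  refine RingQuot.lift
    ⟨((FreeAlgebra.lift R fun i => gen S (f q) i : _ →ₐ[R] HeckeAlg S (f q)) :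
        FreeAlgebra R (Fin 4) →+* HeckeAlg S (f q)), ?_⟩
  have key : ∀ i : Fin 4,
      (FreeAlgebra.lift R fun j => gen S (f q) j) (FreeAlgebra.ι R i) = gen S (f q) i :=
    fun i => FreeAlgebra.lift_ι_apply _ _
  have keyq : (FreeAlgebra.lift R fun j => gen S (f q) j)
      (algebraMap R (FreeAlgebra R (Fin 4)) q) = algebraMap S (HeckeAlg S (f q)) (f q) := by
    rw [AlgHom.commutes]
    rfl
  intro a b hab
  cases hab with
  | TTinv => simpa [key, T, Tinv] using T_mul_Tinv S (f q)
  | TinvT => simpa [key, T, Tinv] using Tinv_mul_T S (f q)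
  | quad => simpa [key, keyq, S1] using quad_rel S (f q)
  | T3S1 => simpa [key, T, S1] using T3_mul_S1 S (f q)
  | braid => simpa [key, S1, S2] using braid_rel S (f q)
  | TS2 => simpa [key, T, S1, S2] using T_mul_S2 S (f q)

/-- `S_1⁻¹ = q⁻¹ (S_1 - q + 1)`, where `qi` is an inverse of `q` in `R`. -/
noncomputable def S1i (qi : R) : HeckeAlg R q :=
  algebraMap R (HeckeAlg R q) qi * (S1 R q - algebraMap R (HeckeAlg R q) q + 1)

/-- `S_2⁻¹ = q⁻¹ (S_2 - q + 1)`, where `qi` is an inverse of `q` in `R`. -/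
noncomputable def S2i (qi : R) : HeckeAlg R q :=
  algebraMap R (HeckeAlg R q) qi * (S2 R q - algebraMap R (HeckeAlg R q) q + 1)

/-- The Bernstein elements `Y_1 = q S_1⁻¹ S_2⁻¹ T`, `Y_2 = S_2⁻¹ T S_1`,
`Y_3 = q⁻¹ T S_1 S_2`, where `qi` is an inverse of `q` in `R`. -/
noncomputable def Y (qi : R) : Fin 3 → HeckeAlg R q :=
  ![algebraMap R (HeckeAlg R q) q * S1i R q qi * S2i R q qi * T R q,
    S2i R q qi * T R q * S1 R q,
    algebraMap R (HeckeAlg R q) qi * T R q * S1 R q * S2 R q]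

end HeckeAlg

noncomputable section

/-- `H`, the affine Hecke algebra over `ℤ[q]` (with `q` an indeterminate). -/
abbrev HPoly : Type := HeckeAlg (Polynomial ℤ) Polynomial.X

end

/-!
Let `s₀ = T S₁ T⁻¹`, `s₁ = S₁`, `s₂ = S₂`; conjugation by `T` permutes these cyclically, so `T³` is
central. The multiples `eᵢ = q Yᵢ` of the Bernstein elements, and the elements `fᵢ` obtained from
them by the symmetry `T ↔ T⁻¹`, `s₁ ↔ s₂`, exist for every parameter `q`. These six elements
commute pairwise, and `eᵢ eⱼ = q f_k T³` for `i ≠ j` while `eᵢ f_k = q²` for the matching `k`. The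
symmetric functions of the `eᵢ` are central by the Bernstein relations, so each `eᵢ` is a root of a
monic cubic over the center; likewise each `fᵢ`. The six elements therefore generate a finite
commutative algebra `B` over the center. Up to linear terms every product `sᵢ sⱼ` with `i ≠ j` is
`e_k T⁻¹` or `f_k T`, which makes `∑ B sᵢ T^k + ∑ B T^k` stable under right multiplication by the
generators.
-/

theorem isIntegral_of_commute_of_symmetric {C A : Type*} [CommRing C] [Ring A] [Algebra C A]
    {x y z : A} (hxy : Commute x y) (hxz : Commute x z)
    (h₁ : x + y + z ∈ (algebraMap C A).range)
    (h₂ : x * y + x * z + y * z ∈ (algebraMap C A).range)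
    (h₃ : x * y * z ∈ (algebraMap C A).range) : IsIntegral C x := by
  obtain ⟨u, hu⟩ := h₁
  obtain ⟨v, hv⟩ := h₂
  obtain ⟨w, hw⟩ := h₃
  refine ⟨.X ^ 3 - .C u * .X ^ 2 + .C v * .X - .C w, by monicity!, ?_⟩
  rw [← Polynomial.aeval_def]
  simp only [map_sub, map_add, map_mul, map_pow, Polynomial.aeval_X, Polynomial.aeval_C, hu, hv, hw]
  linear_combination (norm := noncomm_ring) hxy.eq * x + hxz.eq * x - y * hxz.eq - hxy.eq * z

open scoped IsMulCommutative in
theorem fg_adjoin_of_commute_of_isIntegral {C A : Type*} [CommRing C] [Ring A] [Algebra C A]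
    {s : Set A} (hfin : s.Finite) (hcomm : ∀ x ∈ s, ∀ y ∈ s, Commute x y)
    (hint : ∀ x ∈ s, IsIntegral C x) : (Subalgebra.toSubmodule (Algebra.adjoin C s)).FG := by
  have := Algebra.isMulCommutative_adjoin C hcomm
  have hfg := fg_adjoin_of_finite (R := C)
    (hfin.preimage (Subtype.val_injective (p := (· ∈ Algebra.adjoin C s))).injOn)
    fun x hx ↦ (isIntegral_algHom_iff (Algebra.adjoin C s).val Subtype.val_injective).1 (hint x hx)
  rw [Algebra.adjoin_adjoin_coe_preimage, Algebra.top_toSubmodule] at hfg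
  exact (Submodule.fg_top _).1 hfg

theorem adjoin_mul_le_mul_adjoin {C A : Type*} [CommSemiring C] [Semiring A] [Algebra C A]
    {s : Set A} {L : Submodule C A}
    (h : ∀ x ∈ s, ∀ y ∈ L, x * y ∈ L * Subalgebra.toSubmodule (Algebra.adjoin C s)) :
    Subalgebra.toSubmodule (Algebra.adjoin C s) * L ≤
      L * Subalgebra.toSubmodule (Algebra.adjoin C s) := by
  set K := Subalgebra.toSubmodule (Algebra.adjoin C s)
  have hK : K * K = K := (Algebra.adjoin C s).isIdempotentElem_toSubmodule
  refine Submodule.mul_le.2 fun x hx ↦ ?_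
  induction hx using Algebra.adjoin_induction with
  | mem x hx => exact h x hx
  | algebraMap r =>
    intro y hy
    rw [Algebra.commutes]
    exact Submodule.mul_mem_mul hy (Subalgebra.algebraMap_mem _ r)
  | add x₁ x₂ _ _ h₁ h₂ =>
    intro y hy
    rw [add_mul]
    exact add_mem (h₁ y hy) (h₂ y hy)
  | mul x₁ x₂ _ _ h₁ h₂ =>
    have hLK : ∀ z ∈ L * K, x₁ * z ∈ L * K := by
      intro z hz
      induction hz using Submodule.mul_induction_on' with
      | mem_mul_mem l hl k hk =>
        rw [← hK, ← mul_assoc, ← mul_assoc]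
        exact Submodule.mul_mem_mul (h₁ l hl) hk
      | add z₁ _ z₂ _ hz₁ hz₂ =>
        rw [mul_add]
        exact add_mem hz₁ hz₂
    intro y hy
    rw [mul_assoc]
    exact hLK _ (h₂ y hy)

theorem eq_top_of_mul_mem_of_adjoin_eq_top {C A : Type*} [CommSemiring C] [Semiring A]
    [Algebra C A] {s : Set A} (hs : Algebra.adjoin C s = ⊤) {M : Submodule C A} (one_mem : 1 ∈ M)
    (mul_mem : ∀ m ∈ M, ∀ x ∈ s, m * x ∈ M) : M = ⊤ := by
  have hmul (x : A) : ∀ m ∈ M, m * x ∈ M := by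
    have hx : x ∈ Algebra.adjoin C s := hs ▸ Algebra.mem_top
    induction hx using Algebra.adjoin_induction with
    | mem x hx => exact fun m hm ↦ mul_mem m hm x hx
    | algebraMap r =>
      intro m hm
      rw [← Algebra.commutes, ← Algebra.smul_def]
      exact M.smul_mem r hm
    | add x y _ _ hx hy =>
      intro m hm
      rw [mul_add]
      exact add_mem (hx m hm) (hy m hm)
    | mul x y _ _ hx hy =>
      intro m hm
      rw [← mul_assoc]
      exact hy _ (hx m hm)
  exact eq_top_iff.2 fun x _ ↦ one_mul x ▸ hmul x 1 one_mem

theorem add_add_one_add_add_two {M : Type*} [AddCommMonoid M] (f : Fin 3 → M) (i : Fin 3) :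
    f i + f (i + 1) + f (i + 2) = ∑ j, f j := by
  rw [← Equiv.sum_comp (Equiv.addLeft i), Fin.sum_univ_three]
  simp only [Equiv.coe_addLeft, add_zero]

section Center

variable {R A : Type*} [CommRing R] [Ring A] [Algebra R A]

theorem algebraMap_mem_subringCenter (r : R) : algebraMap R A r ∈ Subring.center A :=
  Subring.mem_center_iff.2 fun x ↦ (Algebra.commutes r x).symm

theorem smul_mem_subringCenter (r : R) {x : A} (hx : x ∈ Subring.center A) :
    r • x ∈ Subring.center A :=
  Algebra.smul_def r x ▸ mul_mem (algebraMap_mem_subringCenter r) hx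

theorem smul_mem_of_subringCenter (M : Submodule (Subring.center A) A) (r : R) {x : A}
    (hx : x ∈ M) : r • x ∈ M :=
  Algebra.smul_def r x ▸ M.smul_mem ⟨_, algebraMap_mem_subringCenter r⟩ hx

theorem adjoin_subringCenter_eq_top {s : Set A} (hs : Algebra.adjoin R s = ⊤) :
    Algebra.adjoin (Subring.center A) s = ⊤ := by
  refine eq_top_iff.2 fun x _ ↦ ?_
  have hx : x ∈ Algebra.adjoin R s := hs ▸ Algebra.mem_top
  induction hx using Algebra.adjoin_induction with
  | mem x hx => exact Algebra.subset_adjoin hx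
  | algebraMap r =>
    exact Subalgebra.algebraMap_mem _ (⟨_, algebraMap_mem_subringCenter r⟩ : Subring.center A)
  | add x y _ _ hx hy => exact add_mem (hx trivial) (hy trivial)
  | mul x y _ _ hx hy => exact mul_mem (hx trivial) (hy trivial)

end Center

theorem braid_of_semiconjBy {M : Type*} [Monoid M] {t : Mˣ} {a b a' b' : M}
    (ha : SemiconjBy (t : M) a a') (hb : SemiconjBy (t : M) b b')
    (h : a * b * a = b * a * b) : a' * b' * a' = b' * a' * b' := by
  rw [← t.mul_left_inj, ← ((ha.mul_right hb).mul_right ha).eq, h,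
    ((hb.mul_right ha).mul_right hb).eq]

theorem quadratic_of_semiconjBy {R A : Type*} [CommRing R] [Ring A] [Algebra R A] {q : R} {t : Aˣ}
    {a a' : A} (ha : SemiconjBy (t : A) a a') (h : (a + 1) * (a - algebraMap R A q) = 0) :
    (a' + 1) * (a' - algebraMap R A q) = 0 := by
  have hmul := (ha.add_right (.one_right _)).mul_right
    (ha.sub_right (Algebra.commute_algebraMap_right q (t : A)))
  rw [← t.mul_left_inj, ← hmul.eq, h, mul_zero, zero_mul]

/-- The generators of an affine Hecke algebra of type `Ã₂` with parameter `q`, in their cyclically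
symmetric form: conjugation by `t` rotates the three simple reflections `s i`. The index set
`Fin 3` stands for `ℤ/3`. -/
structure AffineHeckeSystem {R : Type*} [CommRing R] (q : R) (A : Type*) [Ring A]
    [Algebra R A] where
  t : Aˣ
  s : Fin 3 → A
  semiconj : ∀ i, SemiconjBy (t : A) (s i) (s (i - 1))
  quadratic : ∀ i, (s i + 1) * (s i - algebraMap R A q) = 0
  braid : ∀ i j, s i * s j * s i = s j * s i * s j
  adjoin_eq_top : Algebra.adjoin R ({(t : A), ↑t⁻¹} ∪ Set.range s) = ⊤

namespace AffineHeckeSystem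

variable {R A : Type*} [CommRing R] {q : R} [Ring A] [Algebra R A] (D : AffineHeckeSystem q A)

/-- The element `q (s i)⁻¹`, in a form that makes sense also when `q` is not invertible. -/
def qInv (i : Fin 3) : A := D.s i - (q - 1) • 1

/-- The product of two simple reflections or `qInv`s which, followed by `t`, is the `i`-th Bernstein
element up to the scalar `q`. -/
def word : Fin 3 → A :=
  ![D.s 0 * D.s 1, D.qInv 1 * D.qInv 2, D.qInv 2 * D.s 0]

/-- The multiple `q Y_i` of the `i`-th Bernstein element, with `Y_3` carrying the index `0`. -/
def bernstein (i : Fin 3) : A :=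
  D.word i * D.t

/-- The system obtained by reversing the rotation: the Dynkin diagram automorphism fixing `s 0`. -/
def dual : AffineHeckeSystem q A where
  t := D.t⁻¹
  s i := D.s (-i)
  semiconj i := by
    simpa only [show -i = -(i - 1) - 1 by fin_cases i <;> rfl] using
      (D.semiconj (-(i - 1))).units_inv_symm_left
  quadratic i := D.quadratic (-i)
  braid i j := D.braid (-i) (-j)
  adjoin_eq_top := by
    rw [← D.adjoin_eq_top, inv_inv, Set.pair_comm, ← (neg_surjective (G := Fin 3)).range_comp D.s]
    rfl

/-- The system obtained by shifting the indices so that `t` conjugates each `D.s i` to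
`D.rotate.s i`. -/
def rotate : AffineHeckeSystem q A where
  t := D.t
  s i := D.s (i - 1)
  semiconj i := D.semiconj (i - 1)
  quadratic i := D.quadratic (i - 1)
  braid i j := D.braid (i - 1) (j - 1)
  adjoin_eq_top := by
    rw [← D.adjoin_eq_top, ← (Equiv.subRight (1 : Fin 3)).surjective.range_comp D.s]
    rfl

@[simp] theorem dual_t : D.dual.t = D.t⁻¹ := rfl

@[simp] theorem dual_s (i : Fin 3) : D.dual.s i = D.s (-i) := rfl

@[simp] theorem dual_dual : D.dual.dual = D := by
  obtain ⟨t, s, _, _, _, _⟩ := D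
  simp [dual]

theorem s_mul_qInv (i : Fin 3) : D.s i * D.qInv i = q • 1 := by
  rw [← sub_eq_zero, ← D.quadratic i, qInv, Algebra.algebraMap_eq_smul_one]
  simp only [add_mul, mul_sub, mul_smul_comm, mul_one, one_mul]
  module

theorem qInv_mul_s (i : Fin 3) : D.qInv i * D.s i = q • 1 := by
  rw [← D.s_mul_qInv i, qInv]
  noncomm_ring

theorem s_mul_s_mul_qInv (i j : Fin 3) :
    D.s i * D.s j * D.qInv i = D.qInv j * D.s i * D.s j := by
  linear_combination (norm := (simp only [qInv]; noncomm_ring)) D.braid i j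

theorem s_mul_qInv_mul_qInv (i j : Fin 3) :
    D.s i * D.qInv j * D.qInv i = D.qInv j * D.qInv i * D.s j := by
  calc
    D.s i * (D.s j - (q - 1) • 1) * D.qInv i
      = D.s i * D.s j * D.qInv i - (q - 1) • (D.s i * D.qInv i) := by noncomm_ring
    _ = D.qInv j * D.s i * D.s j - (q - 1) • (D.qInv j * D.s j) := by
      rw [s_mul_s_mul_qInv, s_mul_qInv, qInv_mul_s]
    _ = D.qInv j * (D.s i - (q - 1) • 1) * D.s j := by noncomm_ring

theorem braid_qInv (i j : Fin 3) :
    D.qInv i * D.qInv j * D.qInv i = D.qInv j * D.qInv i * D.qInv j := by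
  calc
    (D.s i - (q - 1) • 1) * D.qInv j * D.qInv i
      = D.s i * D.qInv j * D.qInv i - (q - 1) • (D.qInv j * D.qInv i) := by noncomm_ring
    _ = D.qInv j * D.qInv i * (D.s j - (q - 1) • 1) := by
      rw [s_mul_qInv_mul_qInv]
      noncomm_ring

theorem semiconj_qInv (i : Fin 3) : SemiconjBy (D.t : A) (D.qInv i) (D.qInv (i - 1)) :=
  (D.semiconj i).sub_right ((SemiconjBy.one_right _).smul_right (q - 1))

theorem semiconj_word (i : Fin 3) : SemiconjBy (D.t : A) (D.word i) (D.rotate.word i) :=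
  match i with
  | 0 => (D.semiconj 0).mul_right (D.semiconj 1)
  | 1 => (D.semiconj_qInv 1).mul_right (D.semiconj_qInv 2)
  | 2 => (D.semiconj_qInv 2).mul_right (D.semiconj 0)

theorem semiconj_dual_word (i : Fin 3) :
    SemiconjBy (D.t : A) (D.dual.word i) (D.rotate.dual.word i) :=
  match i with
  | 0 => (D.semiconj 0).mul_right (D.semiconj 2)
  | 1 => (D.semiconj_qInv 2).mul_right (D.semiconj_qInv 1)
  | 2 => (D.semiconj_qInv 1).mul_right (D.semiconj 0)

theorem bernstein_mul_dual_bernstein (i j : Fin 3) :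
    D.bernstein i * D.dual.bernstein j = D.word i * D.rotate.dual.word j := by
  rw [bernstein, bernstein, dual_t, mul_assoc, ← mul_assoc (D.t : A), (D.semiconj_dual_word j).eq,
    Units.mul_inv_cancel_right]

theorem dual_bernstein_mul_bernstein (i j : Fin 3) :
    D.dual.bernstein i * D.bernstein j = D.dual.word i * D.dual.rotate.dual.word j := by
  rw [← bernstein_mul_dual_bernstein, dual_dual]

theorem bernstein_mul_dual_bernstein_one_sub (i : Fin 3) :
    D.bernstein i * D.dual.bernstein (1 - i) = q • q • 1 := by
  rw [bernstein_mul_dual_bernstein]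
  match i with
  | 0 =>
    change D.s 0 * D.s 1 * (D.qInv 1 * D.qInv 0) = _
    linear_combination (norm := noncomm_ring)
      D.s 0 * D.s_mul_qInv 1 * D.qInv 0 + q • D.s_mul_qInv 0
  | 1 =>
    change D.qInv 1 * D.qInv 2 * (D.s 2 * D.s 1) = _
    linear_combination (norm := noncomm_ring)
      D.qInv 1 * D.qInv_mul_s 2 * D.s 1 + q • D.qInv_mul_s 1
  | 2 =>
    change D.qInv 2 * D.s 0 * (D.qInv 0 * D.s 2) = _
    linear_combination (norm := noncomm_ring)
      D.qInv 2 * D.s_mul_qInv 0 * D.s 2 + q • D.qInv_mul_s 2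

theorem commute_bernstein_dual_bernstein_one_sub (i : Fin 3) :
    Commute (D.bernstein i) (D.dual.bernstein (1 - i)) := by
  have h := D.dual.bernstein_mul_dual_bernstein_one_sub (1 - i)
  rw [dual_dual, sub_sub_cancel] at h
  exact (D.bernstein_mul_dual_bernstein_one_sub i).trans h.symm

theorem commute_bernstein_dual_bernstein (i j : Fin 3) :
    Commute (D.bernstein i) (D.dual.bernstein j) := by
  by_cases hij : j = 1 - i
  · exact hij ▸ D.commute_bernstein_dual_bernstein_one_sub i
  rw [Commute, SemiconjBy, bernstein_mul_dual_bernstein, dual_bernstein_mul_bernstein]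
  match i, j with
  | 0, 0 =>
    change D.s 0 * D.s 1 * (D.s 2 * D.s 1) = D.s 0 * D.s 2 * (D.s 1 * D.s 2)
    linear_combination (norm := noncomm_ring) D.s 0 * D.braid 1 2
  | 0, 2 =>
    change D.s 0 * D.s 1 * (D.qInv 0 * D.s 2) = D.qInv 1 * D.s 0 * (D.s 1 * D.s 2)
    linear_combination (norm := noncomm_ring) D.s_mul_s_mul_qInv 0 1 * D.s 2
  | 1, 1 =>
    change D.qInv 1 * D.qInv 2 * (D.qInv 1 * D.qInv 0) =
      D.qInv 2 * D.qInv 1 * (D.qInv 2 * D.qInv 0)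
    linear_combination (norm := noncomm_ring) D.braid_qInv 1 2 * D.qInv 0
  | 1, 2 =>
    change D.qInv 1 * D.qInv 2 * (D.qInv 0 * D.s 2) = D.qInv 1 * D.s 0 * (D.qInv 2 * D.qInv 0)
    linear_combination (norm := noncomm_ring) -D.qInv 1 * D.s_mul_qInv_mul_qInv 0 2
  | 2, 0 =>
    change D.qInv 2 * D.s 0 * (D.s 2 * D.s 1) = D.s 0 * D.s 2 * (D.qInv 0 * D.s 1)
    linear_combination (norm := noncomm_ring) -D.s_mul_s_mul_qInv 0 2 * D.s 1
  | 2, 1 =>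
    change D.qInv 2 * D.s 0 * (D.qInv 1 * D.qInv 0) = D.qInv 2 * D.qInv 1 * (D.qInv 0 * D.s 1)
    linear_combination (norm := noncomm_ring) D.qInv 2 * D.s_mul_qInv_mul_qInv 0 1
  | 0, 1 | 1, 0 | 2, 2 => exact absurd rfl hij

theorem word_mul_rotate_word {i j : Fin 3} (hij : i ≠ j) :
    D.word i * D.rotate.word j = q • D.dual.word (i + j + 1) := by
  match i, j with
  | 0, 1 =>
    change D.s 0 * D.s 1 * (D.qInv 0 * D.qInv 1) = q • (D.qInv 1 * D.s 0)
    linear_combination (norm := noncomm_ring)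
      D.s_mul_s_mul_qInv 0 1 * D.qInv 1 + D.qInv 1 * D.s 0 * D.s_mul_qInv 1
  | 0, 2 =>
    change D.s 0 * D.s 1 * (D.qInv 1 * D.s 2) = q • (D.s 0 * D.s 2)
    linear_combination (norm := noncomm_ring) D.s 0 * D.s_mul_qInv 1 * D.s 2
  | 1, 0 =>
    change D.qInv 1 * D.qInv 2 * (D.s 2 * D.s 0) = q • (D.qInv 1 * D.s 0)
    linear_combination (norm := noncomm_ring) D.qInv 1 * D.qInv_mul_s 2 * D.s 0
  | 1, 2 =>
    change D.qInv 1 * D.qInv 2 * (D.qInv 1 * D.s 2) = q • (D.qInv 2 * D.qInv 1)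
    linear_combination (norm := noncomm_ring)
      D.braid_qInv 1 2 * D.s 2 + D.qInv 2 * D.qInv 1 * D.qInv_mul_s 2
  | 2, 0 =>
    change D.qInv 2 * D.s 0 * (D.s 2 * D.s 0) = q • (D.s 0 * D.s 2)
    linear_combination (norm := noncomm_ring)
      D.qInv 2 * D.braid 0 2 + D.qInv_mul_s 2 * D.s 0 * D.s 2
  | 2, 1 =>
    change D.qInv 2 * D.s 0 * (D.qInv 0 * D.qInv 1) = q • (D.qInv 2 * D.qInv 1)
    linear_combination (norm := noncomm_ring) D.qInv 2 * D.s_mul_qInv 0 * D.qInv 1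
  | 0, 0 | 1, 1 | 2, 2 => exact absurd rfl hij

theorem bernstein_mul_bernstein {i j : Fin 3} (hij : i ≠ j) :
    D.bernstein i * D.bernstein j = q • (D.dual.bernstein (i + j + 1) * D.t ^ 3) := by
  calc
    D.word i * D.t * (D.word j * D.t) = D.word i * (D.t * D.word j) * D.t := by
      simp only [mul_assoc]
    _ = q • (D.dual.word (i + j + 1) * (D.t * D.t)) := by
      rw [(D.semiconj_word j).eq, ← mul_assoc, D.word_mul_rotate_word hij, mul_assoc,
        smul_mul_assoc]
    _ = q • (D.dual.word (i + j + 1) * D.dual.t * D.t ^ 3) := by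
      rw [dual_t, pow_succ', pow_two, mul_assoc (D.dual.word _), Units.inv_mul_cancel_left]

theorem commute_bernstein (i j : Fin 3) : Commute (D.bernstein i) (D.bernstein j) := by
  obtain rfl | hij := eq_or_ne i j
  · rfl
  · rw [Commute, SemiconjBy, D.bernstein_mul_bernstein hij, D.bernstein_mul_bernstein hij.symm,
      add_comm i]

theorem mem_center_of_commute {x : A} (ht : Commute x D.t) (hs : Commute x (D.s 1)) :
    x ∈ Subring.center A := by
  have hrotate (i : Fin 3) (h : Commute x (D.s (i - 1))) : Commute x (D.s i) := by
    rw [Commute, SemiconjBy, ← Units.mul_right_inj D.t]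
    calc
      D.t * (x * D.s i) = x * (D.t * D.s i) := by rw [← mul_assoc, ← ht.eq, mul_assoc]
      _ = D.s (i - 1) * (x * D.t) := by
        rw [(D.semiconj i).eq, ← mul_assoc, h.eq, mul_assoc]
      _ = D.t * (D.s i * x) := by rw [ht.eq, ← mul_assoc, ← (D.semiconj i).eq, mul_assoc]
  have h2 : Commute x (D.s 2) := hrotate 2 hs
  have h0 : Commute x (D.s 0) := hrotate 0 h2
  rw [Subring.mem_center_iff]
  refine fun y ↦ (Algebra.commute_of_mem_adjoin_of_forall_mem_commute
    (D.adjoin_eq_top ▸ Algebra.mem_top : y ∈ _) ?_).symm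
  rintro _ ((rfl | rfl) | ⟨i, rfl⟩)
  · exact ht
  · exact ht.units_inv_right
  · match i with
    | 0 => exact h0
    | 1 => exact hs
    | 2 => exact h2

theorem t_pow_three_mem_center : (D.t : A) ^ 3 ∈ Subring.center A := by
  refine D.mem_center_of_commute (Commute.pow_self _ 3) ?_
  have hcycle := (D.semiconj 2).mul_left ((D.semiconj 0).mul_left (D.semiconj 1))
  rwa [← mul_assoc, ← pow_two, ← pow_succ] at hcycle

theorem qInv_one_mul_bernstein_two : D.qInv 1 * D.bernstein 2 = D.bernstein 1 * D.s 1 := by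
  change D.qInv 1 * (D.qInv 2 * D.s 0 * D.t) = D.qInv 1 * D.qInv 2 * D.t * D.s 1
  linear_combination (norm := noncomm_ring) -D.qInv 1 * D.qInv 2 * (D.semiconj 1).eq

theorem s_one_mul_bernstein_one : D.s 1 * D.bernstein 1 = D.bernstein 2 * D.qInv 1 := by
  change D.s 1 * (D.qInv 1 * D.qInv 2 * D.t) = D.qInv 2 * D.s 0 * D.t * D.qInv 1
  linear_combination (norm := noncomm_ring) D.s_mul_qInv 1 * D.qInv 2 * D.t
    - D.qInv 2 * D.s 0 * (D.semiconj_qInv 1).eq - D.qInv 2 * D.s_mul_qInv 0 * D.t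

theorem commute_bernstein_zero_s_one : Commute (D.bernstein 0) (D.s 1) := by
  change D.s 0 * D.s 1 * D.t * D.s 1 = D.s 1 * (D.s 0 * D.s 1 * D.t)
  linear_combination (norm := noncomm_ring)
    D.s 0 * D.s 1 * (D.semiconj 1).eq + D.braid 0 1 * D.t

theorem sum_rotate_word : ∑ i, D.rotate.word i = ∑ i, D.word i := by
  simp only [Fin.sum_univ_three]
  change D.s 2 * D.s 0 + D.qInv 0 * D.qInv 1 + D.qInv 1 * D.s 2 =
    D.s 0 * D.s 1 + D.qInv 1 * D.qInv 2 + D.qInv 2 * D.s 0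
  simp only [qInv, sub_mul, mul_sub, smul_mul_assoc, mul_smul_comm, one_mul, mul_one]
  module

theorem sum_bernstein_mem_center : ∑ i, D.bernstein i ∈ Subring.center A := by
  refine D.mem_center_of_commute ?_ ?_
  · have h : SemiconjBy (D.t : A) (∑ i, D.word i) (∑ i, D.word i) := by
      conv_rhs => rw [← D.sum_rotate_word]
      simp only [Fin.sum_univ_three]
      exact ((D.semiconj_word 0).add_right (D.semiconj_word 1)).add_right (D.semiconj_word 2)
    simp only [bernstein, ← Finset.sum_mul]
    exact (Commute.symm h).mul_left (Commute.refl _)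
  -- The corrections `(q - 1) e₂` in the two Bernstein relations between `e₁` and `e₂` cancel.
  · rw [Commute, SemiconjBy, Fin.sum_univ_three]
    have h₂ := D.qInv_one_mul_bernstein_two
    have h₁ := D.s_one_mul_bernstein_one
    simp only [qInv] at h₁ h₂
    linear_combination (norm := noncomm_ring) D.commute_bernstein_zero_s_one.eq - h₁ - h₂

theorem sum_bernstein_mul_bernstein_mem_center (i : Fin 3) :
    D.bernstein i * D.bernstein (i + 1) + D.bernstein i * D.bernstein (i + 2)
      + D.bernstein (i + 1) * D.bernstein (i + 2) ∈ Subring.center A := by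
  convert smul_mem_subringCenter q
    (mul_mem D.dual.sum_bernstein_mem_center D.t_pow_three_mem_center) using 1
  rw [D.bernstein_mul_bernstein (by simp), D.bernstein_mul_bernstein (by simp),
    D.bernstein_mul_bernstein (by simp), ← smul_add, ← smul_add, ← add_mul, ← add_mul,
    ← add_add_one_add_add_two _ (i + (i + 1) + 1)]
  match i with
  | 0 | 1 | 2 => rfl

theorem bernstein_mul_bernstein_mul_bernstein (i : Fin 3) :
    D.bernstein i * D.bernstein (i + 1) * D.bernstein (i + 2) = q • q • q • (D.t : A) ^ 3 := by
  have hindex : i + (i + 1) + 1 = 1 - (i + 2) := by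
    fin_cases i <;> rfl
  rw [D.bernstein_mul_bernstein (by simp), hindex, smul_mul_assoc, mul_assoc,
    ← Subring.mem_center_iff.1 D.t_pow_three_mem_center, ← mul_assoc,
    ← (D.commute_bernstein_dual_bernstein_one_sub _).eq, bernstein_mul_dual_bernstein_one_sub,
    smul_mul_assoc, smul_mul_assoc, one_mul]

theorem isIntegral_bernstein (i : Fin 3) :
    IsIntegral (Subring.center A) (D.bernstein i) := by
  have h₁ : D.bernstein i + D.bernstein (i + 1) + D.bernstein (i + 2) ∈ Subring.center A :=
    add_add_one_add_add_two D.bernstein i ▸ D.sum_bernstein_mem_center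
  have h₃ : D.bernstein i * D.bernstein (i + 1) * D.bernstein (i + 2) ∈ Subring.center A := by
    rw [bernstein_mul_bernstein_mul_bernstein]
    exact smul_mem_subringCenter q <| smul_mem_subringCenter q <| smul_mem_subringCenter q
      D.t_pow_three_mem_center
  exact isIntegral_of_commute_of_symmetric (D.commute_bernstein i (i + 1))
    (D.commute_bernstein i (i + 2)) ⟨⟨_, h₁⟩, rfl⟩
    ⟨⟨_, D.sum_bernstein_mul_bernstein_mem_center i⟩, rfl⟩ ⟨⟨_, h₃⟩, rfl⟩

/-- The subalgebra generated over the center by the elements `bernstein i` of the system and of its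
dual, i.e. by multiples of the Bernstein elements and of their inverses. -/
def bernsteinSubalgebra : Subalgebra (Subring.center A) A :=
  Algebra.adjoin _ (Set.range D.bernstein ∪ Set.range D.dual.bernstein)

/-- The subalgebra generated over the center by `t` and `t⁻¹`. -/
def rotationSubalgebra : Subalgebra (Subring.center A) A :=
  Algebra.adjoin _ {(D.t : A), ↑D.t⁻¹}

/-- The module spanned over the center by `1` and the simple reflections. -/
def reflectionSpan : Submodule (Subring.center A) A :=
  Submodule.span _ (insert 1 (Set.range D.s))

/-- The module generated over `bernsteinSubalgebra` by the products of `1` or a simple reflection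
with a power of `t`. -/
def bernsteinModule : Submodule (Subring.center A) A :=
  Subalgebra.toSubmodule D.bernsteinSubalgebra * D.reflectionSpan *
    Subalgebra.toSubmodule D.rotationSubalgebra

theorem bernsteinSubalgebra_fg : (Subalgebra.toSubmodule D.bernsteinSubalgebra).FG := by
  refine fg_adjoin_of_commute_of_isIntegral
    ((Set.finite_range _).union (Set.finite_range _)) ?_ ?_
  · rintro _ (⟨i, rfl⟩ | ⟨i, rfl⟩) _ (⟨j, rfl⟩ | ⟨j, rfl⟩)
    · exact D.commute_bernstein i j
    · exact D.commute_bernstein_dual_bernstein i j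
    · exact (D.commute_bernstein_dual_bernstein j i).symm
    · exact D.dual.commute_bernstein i j
  · rintro _ (⟨i, rfl⟩ | ⟨i, rfl⟩)
    · exact D.isIntegral_bernstein i
    · exact D.dual.isIntegral_bernstein i

theorem isIntegral_t : IsIntegral (Subring.center A) (D.t : A) :=
  .of_pow three_pos
    (isIntegral_algebraMap (x := (⟨_, D.t_pow_three_mem_center⟩ : Subring.center A)))

theorem rotationSubalgebra_fg : (Subalgebra.toSubmodule D.rotationSubalgebra).FG := by
  refine fg_adjoin_of_commute_of_isIntegral (Set.toFinite _) ?_ ?_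
  · rintro _ (rfl | rfl) _ (rfl | rfl)
    · rfl
    · exact (Commute.refl _).units_inv_right
    · exact (Commute.refl _).units_inv_left
    · rfl
  · rintro _ (rfl | rfl)
    · exact D.isIntegral_t
    · exact D.dual.isIntegral_t

theorem bernsteinModule_fg : D.bernsteinModule.FG :=
  (D.bernsteinSubalgebra_fg.mul (Submodule.fg_span ((Set.finite_range _).insert 1))).mul
    D.rotationSubalgebra_fg

theorem dual_rotationSubalgebra : D.dual.rotationSubalgebra = D.rotationSubalgebra := by
  rw [rotationSubalgebra, dual_t, inv_inv, Set.pair_comm, rotationSubalgebra]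

theorem dual_reflectionSpan : D.dual.reflectionSpan = D.reflectionSpan := by
  rw [reflectionSpan, reflectionSpan, ← (neg_surjective (G := Fin 3)).range_comp D.s]
  rfl

theorem dual_bernsteinModule : D.dual.bernsteinModule = D.bernsteinModule := by
  rw [bernsteinModule, dual_reflectionSpan, dual_rotationSubalgebra, bernsteinSubalgebra, dual_dual,
    Set.union_comm, ← bernsteinSubalgebra, ← bernsteinModule]

theorem one_mem_reflectionSpan : 1 ∈ D.reflectionSpan :=
  Submodule.subset_span (Set.mem_insert _ _)

theorem s_mem_reflectionSpan (i : Fin 3) : D.s i ∈ D.reflectionSpan :=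
  Submodule.subset_span (Set.mem_insert_of_mem _ ⟨i, rfl⟩)

theorem t_mem_rotationSubalgebra : (D.t : A) ∈ D.rotationSubalgebra :=
  Algebra.subset_adjoin (Set.mem_insert _ _)

theorem t_inv_mem_rotationSubalgebra : (↑D.t⁻¹ : A) ∈ D.rotationSubalgebra :=
  D.dual_rotationSubalgebra ▸ D.dual.t_mem_rotationSubalgebra

theorem t_mul_mem_reflectionSpan_mul_rotationSubalgebra {x : A} (hx : x ∈ D.reflectionSpan) :
    D.t * x ∈ D.reflectionSpan * Subalgebra.toSubmodule D.rotationSubalgebra := by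
  suffices h : D.reflectionSpan ≤ (D.reflectionSpan * Subalgebra.toSubmodule
      D.rotationSubalgebra).comap (LinearMap.mulLeft _ (D.t : A)) from h hx
  refine Submodule.span_le.2 ?_
  rintro _ (rfl | ⟨i, rfl⟩)
  · rw [SetLike.mem_coe, Submodule.mem_comap, LinearMap.mulLeft_apply, mul_one, ← one_mul (D.t : A)]
    exact Submodule.mul_mem_mul D.one_mem_reflectionSpan D.t_mem_rotationSubalgebra
  · rw [SetLike.mem_coe, Submodule.mem_comap, LinearMap.mulLeft_apply, (D.semiconj i).eq]
    exact Submodule.mul_mem_mul (D.s_mem_reflectionSpan _) D.t_mem_rotationSubalgebra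

theorem rotationSubalgebra_mul_reflectionSpan_le :
    Subalgebra.toSubmodule D.rotationSubalgebra * D.reflectionSpan ≤
      D.reflectionSpan * Subalgebra.toSubmodule D.rotationSubalgebra := by
  refine adjoin_mul_le_mul_adjoin ?_
  rintro _ (rfl | rfl) x hx
  · exact D.t_mul_mem_reflectionSpan_mul_rotationSubalgebra hx
  · have h := D.dual.t_mul_mem_reflectionSpan_mul_rotationSubalgebra (D.dual_reflectionSpan ▸ hx)
    rwa [dual_reflectionSpan, dual_rotationSubalgebra] at h

theorem mul_mul_mem_bernsteinModule {b x k : A} (hb : b ∈ D.bernsteinSubalgebra)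
    (hx : x ∈ D.reflectionSpan) (hk : k ∈ D.rotationSubalgebra) : b * x * k ∈ D.bernsteinModule :=
  Submodule.mul_mem_mul (Submodule.mul_mem_mul hb hx) hk

theorem reflectionSpan_le_bernsteinModule : D.reflectionSpan ≤ D.bernsteinModule := fun x hx ↦ by
  simpa only [one_mul, mul_one] using D.mul_mul_mem_bernsteinModule (one_mem _) hx (one_mem _)

theorem word_mem_bernsteinModule (i : Fin 3) : D.word i ∈ D.bernsteinModule := by
  simpa only [mul_one, bernstein, Units.mul_inv_cancel_right] using
    D.mul_mul_mem_bernsteinModule (Algebra.subset_adjoin (.inl ⟨i, rfl⟩)) D.one_mem_reflectionSpan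
      D.t_inv_mem_rotationSubalgebra

theorem s_mul_s_add_one_sub_word_mem_reflectionSpan (i : Fin 3) :
    D.s i * D.s (i + 1) - D.word i ∈ D.reflectionSpan := by
  match i with
  | 0 =>
    change D.s 0 * D.s 1 - D.s 0 * D.s 1 ∈ _
    rw [sub_self]
    exact zero_mem _
  | 1 =>
    change D.s 1 * D.s 2 - (D.s 1 - (q - 1) • 1) * (D.s 2 - (q - 1) • 1) ∈ _
    have h : D.s 1 * D.s 2 - (D.s 1 - (q - 1) • 1) * (D.s 2 - (q - 1) • 1) =
        (q - 1) • (D.s 1 + D.s 2 - (q - 1) • 1) := by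
      simp only [sub_mul, mul_sub, smul_mul_assoc, mul_smul_comm, one_mul, mul_one]
      module
    rw [h]
    exact smul_mem_of_subringCenter _ _ (sub_mem (add_mem (D.s_mem_reflectionSpan 1)
      (D.s_mem_reflectionSpan 2)) (smul_mem_of_subringCenter _ _ D.one_mem_reflectionSpan))
  | 2 =>
    change D.s 2 * D.s 0 - (D.s 2 - (q - 1) • 1) * D.s 0 ∈ _
    rw [sub_mul, smul_mul_assoc, one_mul, sub_sub_cancel]
    exact smul_mem_of_subringCenter _ _ (D.s_mem_reflectionSpan 0)

theorem s_mul_s_add_one_mem_bernsteinModule (i : Fin 3) :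
    D.s i * D.s (i + 1) ∈ D.bernsteinModule := by
  rw [← sub_add_cancel (D.s i * D.s (i + 1)) (D.word i)]
  exact add_mem
    (D.reflectionSpan_le_bernsteinModule (D.s_mul_s_add_one_sub_word_mem_reflectionSpan i))
    (D.word_mem_bernsteinModule i)

theorem s_mul_self_mem_bernsteinModule (i : Fin 3) : D.s i * D.s i ∈ D.bernsteinModule := by
  have h : D.s i * D.s i = (q - 1) • D.s i + q • 1 := by
    rw [← D.s_mul_qInv i, qInv, mul_sub, mul_smul_comm, mul_one, add_sub_cancel]
  exact D.reflectionSpan_le_bernsteinModule (h ▸ add_mem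
    (smul_mem_of_subringCenter _ _ (D.s_mem_reflectionSpan i))
    (smul_mem_of_subringCenter _ _ D.one_mem_reflectionSpan))

theorem s_mul_s_mem_bernsteinModule (i j : Fin 3) : D.s i * D.s j ∈ D.bernsteinModule := by
  obtain rfl | rfl | rfl : j = i ∨ j = i + 1 ∨ j = i - 1 := by
    decide +revert
  · exact D.s_mul_self_mem_bernsteinModule _
  · exact D.s_mul_s_add_one_mem_bernsteinModule i
  · have h := D.dual.s_mul_s_add_one_mem_bernsteinModule (-i)
    rwa [dual_bernsteinModule, dual_s, dual_s, neg_neg, neg_add, neg_neg, ← sub_eq_add_neg] at h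

theorem reflectionSpan_mul_reflectionSpan_le :
    D.reflectionSpan * D.reflectionSpan ≤ D.bernsteinModule := by
  rw [reflectionSpan, Submodule.span_mul_span, Submodule.span_le]
  rintro _ ⟨_, rfl | ⟨i, rfl⟩, _, rfl | ⟨j, rfl⟩, rfl⟩
  · simpa using D.reflectionSpan_le_bernsteinModule D.one_mem_reflectionSpan
  · simpa using D.reflectionSpan_le_bernsteinModule (D.s_mem_reflectionSpan j)
  · simpa using D.reflectionSpan_le_bernsteinModule (D.s_mem_reflectionSpan i)
  · exact D.s_mul_s_mem_bernsteinModule i j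

theorem bernsteinModule_mul_rotationSubalgebra :
    D.bernsteinModule * Subalgebra.toSubmodule D.rotationSubalgebra = D.bernsteinModule := by
  rw [bernsteinModule, mul_assoc, D.rotationSubalgebra.isIdempotentElem_toSubmodule.eq]

theorem bernsteinSubalgebra_mul_bernsteinModule :
    Subalgebra.toSubmodule D.bernsteinSubalgebra * D.bernsteinModule = D.bernsteinModule := by
  rw [bernsteinModule, ← mul_assoc, ← mul_assoc,
    D.bernsteinSubalgebra.isIdempotentElem_toSubmodule.eq]

theorem bernsteinModule_mul_reflectionSpan_le :
    D.bernsteinModule * D.reflectionSpan ≤ D.bernsteinModule := by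
  set B := Subalgebra.toSubmodule D.bernsteinSubalgebra
  set K := Subalgebra.toSubmodule D.rotationSubalgebra
  calc
    B * D.reflectionSpan * K * D.reflectionSpan
      ≤ B * D.reflectionSpan * (D.reflectionSpan * K) := by
        rw [mul_assoc _ K]
        exact mul_le_mul_right D.rotationSubalgebra_mul_reflectionSpan_le _
    _ = B * (D.reflectionSpan * D.reflectionSpan) * K := by simp only [mul_assoc]
    _ ≤ B * D.bernsteinModule * K := by
      gcongr
      exact D.reflectionSpan_mul_reflectionSpan_le
    _ = D.bernsteinModule := by
      rw [bernsteinSubalgebra_mul_bernsteinModule, bernsteinModule_mul_rotationSubalgebra]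

theorem bernsteinModule_eq_top : D.bernsteinModule = ⊤ := by
  refine eq_top_of_mul_mem_of_adjoin_eq_top (adjoin_subringCenter_eq_top D.adjoin_eq_top)
    (D.reflectionSpan_le_bernsteinModule D.one_mem_reflectionSpan) ?_
  rintro m hm _ ((rfl | rfl) | ⟨i, rfl⟩)
  · exact D.bernsteinModule_mul_rotationSubalgebra ▸
      Submodule.mul_mem_mul hm D.t_mem_rotationSubalgebra
  · exact D.bernsteinModule_mul_rotationSubalgebra ▸
      Submodule.mul_mem_mul hm D.t_inv_mem_rotationSubalgebra
  · exact D.bernsteinModule_mul_reflectionSpan_le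
      (Submodule.mul_mem_mul hm (D.s_mem_reflectionSpan i))

theorem finite_subringCenter (D : AffineHeckeSystem q A) : Module.Finite (Subring.center A) A :=
  ⟨D.bernsteinModule_eq_top ▸ D.bernsteinModule_fg⟩

end AffineHeckeSystem

namespace HeckeAlg

variable (R : Type) [CommRing R] (q : R)

theorem adjoin_range_gen : Algebra.adjoin R (Set.range (gen R q)) = ⊤ := by
  rw [show gen R q = RingQuot.mkAlgHom R (HeckeRel R q) ∘ FreeAlgebra.ι R from rfl, Set.range_comp,
    ← AlgHom.map_adjoin, FreeAlgebra.adjoin_range_ι, Algebra.map_top, AlgHom.range_eq_top]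
  exact RingQuot.mkAlgHom_surjective R _

/-- The invertible generator `T` as a unit. -/
noncomputable def TUnit : (HeckeAlg R q)ˣ :=
  ⟨T R q, Tinv R q, T_mul_Tinv R q, Tinv_mul_T R q⟩

/-- The cyclic triple of simple reflections of `H`: the generators `S_1`, `S_2` and the conjugate
`T S_1 T⁻¹`, placed at index `0`. -/
noncomputable def reflection : Fin 3 → HeckeAlg R q :=
  ![T R q * S1 R q * Tinv R q, S1 R q, S2 R q]

theorem semiconjBy_reflection (i : Fin 3) :
    SemiconjBy (TUnit R q : HeckeAlg R q) (reflection R q i) (reflection R q (i - 1)) :=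
  match i with
  | 0 => by
    have hcube : T R q * (T R q * (T R q * S1 R q)) = T R q * (S2 R q * T R q * T R q) := by
      linear_combination (norm := noncomm_ring)
        T3_mul_S1 R q - T_mul_S2 R q * T R q * T R q
    have hsquare : T R q * (T R q * S1 R q) = S2 R q * T R q * T R q :=
      (TUnit R q).mul_right_inj.1 hcube
    change T R q * (T R q * S1 R q * Tinv R q) = S2 R q * T R q
    rw [← mul_assoc, hsquare, mul_assoc, T_mul_Tinv, mul_one]
  | 1 => Units.mk_semiconjBy (TUnit R q) (S1 R q)
  | 2 => T_mul_S2 R q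

theorem quadratic_reflection (i : Fin 3) :
    (reflection R q i + 1) * (reflection R q i - algebraMap R (HeckeAlg R q) q) = 0 := by
  have h₁ := quad_rel R q
  have h₀ := quadratic_of_semiconjBy (semiconjBy_reflection R q 1) h₁
  have h₂ := quadratic_of_semiconjBy (semiconjBy_reflection R q 0) h₀
  match i with
  | 0 => exact h₀
  | 1 => exact h₁
  | 2 => exact h₂

theorem braid_reflection (i j : Fin 3) :
    reflection R q i * reflection R q j * reflection R q i =
      reflection R q j * reflection R q i * reflection R q j := by
  have h₁₂ := braid_rel R q
  have h₀₁ := braid_of_semiconjBy (semiconjBy_reflection R q 1) (semiconjBy_reflection R q 2) h₁₂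
  have h₂₀ := braid_of_semiconjBy (semiconjBy_reflection R q 0) (semiconjBy_reflection R q 1) h₀₁
  match i, j with
  | 0, 0 | 1, 1 | 2, 2 => rfl
  | 0, 1 => exact h₀₁
  | 1, 0 => exact h₀₁.symm
  | 1, 2 => exact h₁₂
  | 2, 1 => exact h₁₂.symm
  | 2, 0 => exact h₂₀
  | 0, 2 => exact h₂₀.symm

/-- The generators of `H` in cyclically symmetric form. -/
noncomputable def affineHeckeSystem : AffineHeckeSystem q (HeckeAlg R q) where
  t := TUnit R q
  s := reflection R q
  semiconj := semiconjBy_reflection R q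
  quadratic := quadratic_reflection R q
  braid := braid_reflection R q
  adjoin_eq_top := by
    refine eq_top_iff.2 ((adjoin_range_gen R q).ge.trans (Algebra.adjoin_mono ?_))
    rintro _ ⟨i, rfl⟩
    match i with
    | 0 => exact .inl (.inl rfl)
    | 1 => exact .inl (.inr rfl)
    | 2 => exact .inr ⟨1, rfl⟩
    | 3 => exact .inr ⟨2, rfl⟩

end HeckeAlg

theorem statement2_general (R : Type) [CommRing R] (q : R) :
    Module.Finite (Subring.center (HeckeAlg R q)) (HeckeAlg R q) :=
  (HeckeAlg.affineHeckeSystem R q).finite_subringCenter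

/-- `H` is a finitely generated module over its center `Z(H)`. -/
theorem statement2 : Module.Finite (Subring.center HPoly) HPoly :=
  statement2_general _ _
end

section
/- In H_{Z[q^{±1}]}, the elements Y_1, Y_2, Y_3 are invertible and pairwise commute: Y_iY_j = Y_jY_i for all 1 ≤ i, j ≤ 3. -/
noncomputable section

/-- `H_{ℤ[q^{±1}]}`, the base change of `H` to the Laurent polynomial ring `ℤ[q,q⁻¹]`. -/
abbrev HLau : Type := HeckeAlg (LaurentPolynomial ℤ) (LaurentPolynomial.T 1)

/-- The canonical map `ι : H → H_{ℤ[q^{±1}]}`. -/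
def ιLau : HPoly →+* HLau :=
  HeckeAlg.map Polynomial.toLaurent Polynomial.X (LaurentPolynomial.T 1) Polynomial.toLaurent_X

/-- The Bernstein elements `Y_1, Y_2, Y_3` of `H_{ℤ[q^{±1}]}`
(where `S_i⁻¹ = q⁻¹(S_i - q + 1)` and `q⁻¹` is the Laurent monomial `T (-1)`). -/
def YLau : Fin 3 → HLau :=
  HeckeAlg.Y (LaurentPolynomial ℤ) (LaurentPolynomial.T 1) (LaurentPolynomial.T (-1))

/-- The image of `q` in `H_{ℤ[q^{±1}]}`. -/
def qLau : HLau := algebraMap (LaurentPolynomial ℤ) HLau (LaurentPolynomial.T 1)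

/-- The image of `q⁻¹` in `H_{ℤ[q^{±1}]}`. -/
def qLauInv : HLau := algebraMap (LaurentPolynomial ℤ) HLau (LaurentPolynomial.T (-1))

/-- The structure map of the `ℤ[q]`-algebra `H_{ℤ[q^{±1}]}`, i.e. `ℤ[q] → ℤ[q,q⁻¹] → H_{ℤ[q^{±1}]}`.
A `ℤ[q]`-subalgebra of `H_{ℤ[q^{±1}]}` is a subring containing the range of this map. -/
def structZq : Polynomial ℤ →+* HLau :=
  (algebraMap (LaurentPolynomial ℤ) HLau).comp Polynomial.toLaurent

end

/-!
Up to central scalars, the `Y_i` are words in the units `T`, `S_1`, `S_2`, so their commutation is a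
statement about groups. Conjugation by `T` permutes `S_2 ↦ S_1 ↦ S_0 ↦ S_2` cyclically, where
`S_0 = T S_1 T⁻¹`; hence the braid relation between `S_1` and `S_2` propagates to every pair among
the three. Moving `T` to the right, the `Y_i` become `S_1⁻¹ S_2⁻¹ T`, `S_2⁻¹ S_0 T`, `S_0 S_1 T`,
and the commutation of two of them is exactly one of the three braid relations.
-/

section Group

variable {G : Type*} [Group G] {t a b : G}

theorem commute_mul_right_iff_conj {x y : G} :
    Commute (x * t) (y * t) ↔ x * MulAut.conj t y = y * MulAut.conj t x := by
  rw [commute_iff_eq, ← mul_left_inj (t * t)⁻¹]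
  simp only [MulAut.conj_apply, mul_inv_rev, mul_assoc, mul_inv_cancel_left]

/-- The relations of the extended affine braid group of type `A_2` (for `Gl_3`), for elements
`t`, `a`, `b` of a group playing the roles of `T`, `S_1`, `S_2`. -/
structure IsAffineBraidTriple (t a b : G) : Prop where
  semiconj : SemiconjBy t b a
  commute_cube : Commute (t ^ 3) a
  braid : a * b * a = b * a * b

/-- The Bernstein elements of the extended affine braid group: the elements `Y_1`, `Y_2`, `Y_3` of
the affine Hecke algebra without their powers of `q`, indexed from `0`. -/
def braidBernstein (t a b : G) : Fin 3 → G :=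
  ![a⁻¹ * b⁻¹ * t, b⁻¹ * t * a, t * a * b]

namespace IsAffineBraidTriple

theorem conj_right (h : IsAffineBraidTriple t a b) : MulAut.conj t b = a :=
  mul_inv_eq_of_eq_mul h.semiconj

theorem conj_conj_left (h : IsAffineBraidTriple t a b) :
    MulAut.conj t (MulAut.conj t a) = b := by
  apply (MulAut.conj t).injective
  calc MulAut.conj t (MulAut.conj t (MulAut.conj t a))
      = t ^ 3 * a * (t ^ 3)⁻¹ := by
        simp only [MulAut.conj_apply, pow_three', mul_inv_rev, mul_assoc]
    _ = a := mul_inv_eq_of_eq_mul h.commute_cube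
    _ = MulAut.conj t b := h.conj_right.symm

theorem rotate (h : IsAffineBraidTriple t a b) :
    IsAffineBraidTriple t (MulAut.conj t a) a where
  semiconj := by simp [SemiconjBy]
  commute_cube := by
    have hcube := h.commute_cube.map (MulAut.conj t)
    rwa [map_pow, MulAut.conj_apply t t, mul_inv_cancel_right] at hcube
  braid := by simpa only [map_mul, h.conj_right] using congrArg (MulAut.conj t) h.braid

theorem braidBernstein_eq (h : IsAffineBraidTriple t a b) :
    braidBernstein t a b =
      ![a⁻¹ * b⁻¹ * t, b⁻¹ * MulAut.conj t a * t, MulAut.conj t a * a * t] := by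
  have hta : t * a = MulAut.conj t a * t := h.rotate.semiconj
  rw [braidBernstein, mul_assoc b⁻¹ t a, hta, mul_assoc _ t b, h.semiconj.eq, ← mul_assoc,
    ← mul_assoc]

theorem commute_braidBernstein_zero_one (h : IsAffineBraidTriple t a b) :
    Commute (braidBernstein t a b 0) (braidBernstein t a b 1) := by
  have braid_inv : a⁻¹ * b⁻¹ * a⁻¹ = b⁻¹ * a⁻¹ * b⁻¹ := by
    simpa only [mul_inv_rev, mul_assoc] using congrArg (·⁻¹) h.braid
  simp only [h.braidBernstein_eq, Matrix.cons_val]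
  rw [commute_mul_right_iff_conj]
  simp only [map_mul, map_inv, h.conj_right, h.conj_conj_left]
  calc a⁻¹ * b⁻¹ * (a⁻¹ * b) = a⁻¹ * b⁻¹ * a⁻¹ * b := by group
    _ = b⁻¹ * a⁻¹ := by rw [braid_inv, inv_mul_cancel_right]
    _ = b⁻¹ * MulAut.conj t a * ((MulAut.conj t a)⁻¹ * a⁻¹) := by group

theorem commute_braidBernstein_zero_two (h : IsAffineBraidTriple t a b) :
    Commute (braidBernstein t a b 0) (braidBernstein t a b 2) := by
  simp only [h.braidBernstein_eq, Matrix.cons_val]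
  rw [commute_mul_right_iff_conj]
  simp only [map_mul, map_inv, h.conj_right, h.conj_conj_left]
  generalize hc : MulAut.conj t a = c
  have braid : c * a * c = a * c * a := hc ▸ h.rotate.braid
  calc a⁻¹ * b⁻¹ * (b * c) = a⁻¹ * (c * a * c) * (c⁻¹ * a⁻¹) := by group
    _ = c * a * (c⁻¹ * a⁻¹) := by rw [braid]; group

theorem commute_braidBernstein_one_two (h : IsAffineBraidTriple t a b) :
    Commute (braidBernstein t a b 1) (braidBernstein t a b 2) := by
  simp only [h.braidBernstein_eq, Matrix.cons_val]
  rw [commute_mul_right_iff_conj]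
  simp only [map_mul, map_inv, h.conj_right, h.conj_conj_left]
  generalize hc : MulAut.conj t a = c
  have braid : b * c * b = c * b * c := by
    rw [← hc]
    simpa only [h.conj_conj_left] using h.rotate.rotate.braid
  calc b⁻¹ * c * (b * c) = b⁻¹ * (c * b * c) := by group
    _ = c * a * (a⁻¹ * b) := by rw [← braid]; group

theorem commute_braidBernstein (h : IsAffineBraidTriple t a b) (i j : Fin 3) :
    Commute (braidBernstein t a b i) (braidBernstein t a b j) := by
  have h₀₁ := h.commute_braidBernstein_zero_one
  have h₀₂ := h.commute_braidBernstein_zero_two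
  have h₁₂ := h.commute_braidBernstein_one_two
  fin_cases i <;> fin_cases j
  exacts [.refl _, h₀₁, h₀₂, h₀₁.symm, .refl _, h₁₂, h₀₂.symm, h₁₂.symm, .refl _]

end IsAffineBraidTriple

end Group

section Quadratic

variable {R A : Type*} [CommSemiring R] [Ring A] [Algebra R A]

/-- The inverse `q⁻¹ (s - q + 1)` of a root `s` of the quadratic Hecke relation
`(s + 1) (s - q) = 0` with invertible parameter `q`. -/
def quadraticInv (q : Rˣ) (s : A) : A :=
  algebraMap R A ↑q⁻¹ * (s - algebraMap R A q + 1)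

theorem commute_quadraticInv (q : Rˣ) (s : A) : Commute s (quadraticInv q s) :=
  have comm (r : R) : Commute s (algebraMap R A r) := Algebra.commute_algebraMap_right r s
  (comm _).mul_right (((Commute.refl s).sub_right (comm _)).add_right (.one_right s))

theorem mul_quadraticInv (q : Rˣ) {s : A} (h : (s + 1) * (s - algebraMap R A q) = 0) :
    s * quadraticInv q s = 1 := by
  have hs : s * (s - algebraMap R A q + 1) = algebraMap R A q := by
    rw [← sub_eq_zero, ← h]
    noncomm_ring
  rw [quadraticInv, Algebra.left_comm, hs, ← map_mul, Units.inv_mul, map_one]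

/-- A root `s` of the quadratic Hecke relation with invertible parameter `q`, as a unit whose
inverse is `quadraticInv q s`. -/
def unitOfQuadratic (q : Rˣ) (s : A) (h : (s + 1) * (s - algebraMap R A q) = 0) : Aˣ where
  val := s
  inv := quadraticInv q s
  val_inv := mul_quadraticInv q h
  inv_val := (commute_quadraticInv q s).eq.symm.trans (mul_quadraticInv q h)

theorem quadratic_eq_zero_of_semiconjBy {t : Aˣ} {r s : A} (h : SemiconjBy (t : A) s r) (q : R)
    (hr : (r + 1) * (r - algebraMap R A q) = 0) :
    (s + 1) * (s - algebraMap R A q) = 0 := by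
  have hq : SemiconjBy (t : A) (algebraMap R A q) (algebraMap R A q) :=
    Algebra.commute_algebraMap_right q (t : A)
  have hquad : (t : A) * ((s + 1) * (s - algebraMap R A q)) =
      (r + 1) * (r - algebraMap R A q) * t :=
    ((h.add_right (.one_right _)).mul_right (h.sub_right hq)).eq
  rwa [hr, zero_mul, Units.mul_right_eq_zero] at hquad

end Quadratic

namespace HeckeAlg

variable (R : Type) [CommRing R]

/-- The generator `T` as a unit. -/
noncomputable def unitT (q : R) : (HeckeAlg R q)ˣ :=
  ⟨T R q, Tinv R q, T_mul_Tinv R q, Tinv_mul_T R q⟩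

theorem quad_rel_S2 (q : R) : (S2 R q + 1) * (S2 R q - algebraMap R (HeckeAlg R q) q) = 0 :=
  quadratic_eq_zero_of_semiconjBy (t := unitT R q) (T_mul_S2 R q) q (quad_rel R q)

variable (q : Rˣ)

/-- The generator `S_1` as a unit, with inverse `S1i`. -/
noncomputable def unitS1 : (HeckeAlg R (q : R))ˣ :=
  unitOfQuadratic q (S1 R q) (quad_rel R q)

/-- The generator `S_2` as a unit, with inverse `S2i`. -/
noncomputable def unitS2 : (HeckeAlg R (q : R))ˣ :=
  unitOfQuadratic q (S2 R q) (quad_rel_S2 R q)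

theorem isAffineBraidTriple_units :
    IsAffineBraidTriple (unitT R (q : R)) (unitS1 R q) (unitS2 R q) where
  semiconj := Units.ext (T_mul_S2 R q)
  commute_cube := Units.ext (T3_mul_S1 R q)
  braid := Units.ext (braid_rel R q)

theorem Y_eq_smul_braidBernstein (i : Fin 3) :
    Y R q ↑q⁻¹ i =
      ![q, 1, q⁻¹] i •
        (↑(braidBernstein (unitT R (q : R)) (unitS1 R q) (unitS2 R q) i) : HeckeAlg R (q : R)) := by
  fin_cases i
  · rw [Units.smul_def, Algebra.smul_def]
    change algebraMap R _ ↑q * S1i R q ↑q⁻¹ * S2i R q ↑q⁻¹ * T R q =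
      algebraMap R _ ↑q * (S1i R q ↑q⁻¹ * S2i R q ↑q⁻¹ * T R q)
    simp only [mul_assoc]
  · exact (one_smul _ _).symm
  · rw [Units.smul_def, Algebra.smul_def]
    change algebraMap R _ ↑q⁻¹ * T R q * S1 R q * S2 R q =
      algebraMap R _ ↑q⁻¹ * (T R q * S1 R q * S2 R q)
    simp only [mul_assoc]

end HeckeAlg

/-- The Laurent monomial `T ^ n` as a unit. For `n = 1` over `ℤ` it is the parameter `q`. -/
noncomputable def laurentMonomialUnit (R : Type*) [Semiring R] (n : ℤ) :
    (LaurentPolynomial R)ˣ where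
  val := LaurentPolynomial.T n
  inv := LaurentPolynomial.T (-n)
  val_inv := by rw [← LaurentPolynomial.T_add, add_neg_cancel, LaurentPolynomial.T_zero]
  inv_val := by rw [← LaurentPolynomial.T_add, neg_add_cancel, LaurentPolynomial.T_zero]

theorem statement3_general (R : Type) [CommRing R] (q : Rˣ) :
    (∀ i : Fin 3, IsUnit (HeckeAlg.Y R q ↑q⁻¹ i)) ∧
      ∀ i j : Fin 3, HeckeAlg.Y R q ↑q⁻¹ i * HeckeAlg.Y R q ↑q⁻¹ j =
        HeckeAlg.Y R q ↑q⁻¹ j * HeckeAlg.Y R q ↑q⁻¹ i := by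
  simp only [HeckeAlg.Y_eq_smul_braidBernstein]
  refine ⟨fun i => (Units.isUnit _).smul _, fun i j => ?_⟩
  have h := (HeckeAlg.isAffineBraidTriple_units R q).commute_braidBernstein i j
  exact ((h.units_val.smul_left _).smul_right _).eq

/-- In `H_{ℤ[q^{±1}]}`, the elements `Y_1, Y_2, Y_3` are invertible and
pairwise commute. -/
theorem statement3 :
    (∀ i : Fin 3, IsUnit (YLau i)) ∧ ∀ i j : Fin 3, YLau i * YLau j = YLau j * YLau i :=
  statement3_general _ (laurentMonomialUnit ℤ 1)
end

section
/- For an E-algebra homomorphism χ : A_E → E with y_i = χ(Y_i) (1 ≤ i ≤ 3), the standard module I_A(χ) = H_E ⊗_{A_E, χ} E admits an O_E-integral structure if and only if y_1y_2y_3 is a unit of O_E and, for all 1 ≤ i ≠ j ≤ 3, the elements q(y_iy_j), q(y_iy_j)^{-1}, q y_i and q y_i^{-1} all lie in O_E. -/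
noncomputable section

variable (p : ℕ) [Fact p.Prime] (E : Type) [Field E] [Algebra ℚ_[p] E]
  [FiniteDimensional ℚ_[p] E] [Algebra ℤ_[p] E] [IsScalarTower ℤ_[p] ℚ_[p] E] (f : ℕ)

/-- The ring of integers `O_E` of the finite extension `E` of `ℚ_p`:
the integral closure of `ℤ_p` in `E`. -/
abbrev OE : Subalgebra ℤ_[p] E := integralClosure ℤ_[p] E

/-- `q_E = p^f ∈ O_E ⊆ E`, the image of the parameter `q`. -/
def qE : E := (p : E) ^ f

/-- `H_E = H ⊗_{ℤ[q]} E`, realized as the Hecke algebra over `E` with parameter `q_E`. -/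
abbrev HE : Type := HeckeAlg E (qE p E f)

/-- The canonical map `H → H_E` (image of `H` in `H_E`). -/
def ιE : HPoly →+* HE p E f :=
  HeckeAlg.map (Polynomial.eval₂RingHom (Int.castRingHom E) (qE p E f)) Polynomial.X
    (qE p E f) (Polynomial.eval₂_X _ _)

/-- The Bernstein elements `Y_1, Y_2, Y_3` of `H_E`. -/
def YE : Fin 3 → HE p E f := HeckeAlg.Y E (qE p E f) (qE p E f)⁻¹

variable (u : Fin 3 → HE p E f)

/-- `A_E`, the commutative `E`-subalgebra of `H_E` generated by `Y_1^{±1}, Y_2^{±1}, Y_3^{±1}`;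
here `u i` denotes the inverse of `Y_i`. -/
abbrev AE : Subalgebra E (HE p E f) :=
  Algebra.adjoin E (Set.range (YE p E f) ∪ Set.range u)

variable (χ : AE p E f u →ₐ[E] E)

/-- The value `y_i = χ(Y_i)` of an `E`-character `χ` of `A_E`. -/
def yval (i : Fin 3) : E :=
  χ ⟨YE p E f i, Algebra.subset_adjoin (Set.mem_union_left _ ⟨i, rfl⟩)⟩

/-- The left ideal of `H_E` generated by the elements `a - χ(a)`, `a ∈ A_E`. -/
def Jχ : Submodule (HE p E f) (HE p E f) :=
  Submodule.span (HE p E f)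
    {x : HE p E f | ∃ a : AE p E f u, x = (a : HE p E f) - algebraMap E (HE p E f) (χ a)}

/-- The standard module `I_A(χ) = H_E ⊗_{A_E, χ} E`, realized as the quotient of `H_E`
by the left ideal generated by the `a - χ(a)`, `a ∈ A_E`. -/
def StdMod : Type := HE p E f ⧸ Jχ p E f u χ

instance : AddCommGroup (StdMod p E f u χ) := by unfold StdMod; infer_instance
instance : Module (HE p E f) (StdMod p E f u χ) := by unfold StdMod; infer_instance
instance : Module E (StdMod p E f u χ) := by unfold StdMod; infer_instance

/-- `L` is an `O_E`-integral structure of the standard module `I_A(χ)`: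
an `O_E`-submodule which is free (it has an `O_E`-basis), stable under the image of `H`
in `H_E`, and contains an `E`-basis of `I_A(χ)`. -/
def IsIntegralStructure (L : Set (StdMod p E f u χ)) : Prop :=
  (0 ∈ L) ∧ (∀ x ∈ L, ∀ y ∈ L, x + y ∈ L) ∧
    (∀ (c : OE p E) (x : StdMod p E f u χ), x ∈ L → (c : E) • x ∈ L) ∧
    (∀ (h : HPoly) (x : StdMod p E f u χ), x ∈ L → ιE p E f h • x ∈ L) ∧
    (∃ (n : ℕ) (b : Fin n → StdMod p E f u χ), (∀ i, b i ∈ L) ∧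
      ∀ x ∈ L, ∃! c : Fin n → OE p E, x = ∑ i, ((c i : E) • b i)) ∧
    (∃ (m : ℕ) (bE : Module.Basis (Fin m) E (StdMod p E f u χ)), ∀ i, bE i ∈ L)

end

/-!
Let `v` generate the standard module, so that `Y_i v = y_i v`. The elements `q Y_i` and `q Y_i⁻¹`
do not involve `q⁻¹`, and `T³ = Y_1 Y_2 Y_3`; hence all of these preserve every integral structure,
and since an operator preserving a lattice has integral eigenvalues, `q y_i`, `q y_i⁻¹` and
`(y_1 y_2 y_3)^{±1}` are integral. The conditions on `y_i y_j` then follow from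
`y_i y_j = (y_1 y_2 y_3) y_k⁻¹`.

Conversely the module is spanned by the six vectors `T^i v` and `T^i S_1 v` with `i < 3`, and the
quadratic relation lets `S_1` exchange them in pairs: `v` with `S_1 v`, `T S_1 v` with
`q y_1⁻¹ T² v`, and `T v` with `y_2⁻¹ T² S_1 v`. After rescaling the three vectors `T^i S_1 v` by a
common factor `d`, the six of them span a stable lattice as soon as `a / d` and `q d / a` are
integral for `a = 1, y_1, y_2⁻¹`. The `a` of largest absolute value is such a `d`, because for all
`a, a'` the element `q a / a'` is either `q` or one of those assumed to be integral.

That `v ≠ 0` is seen on the principal series, which has a nonzero vector with the same eigenvalues.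
-/

section Lattice

open Polynomial

variable {R A M : Type*} [CommRing R] [Ring A] [Algebra R A] [AddCommGroup M] [Module R M]
  [Module A M] [IsScalarTower R A M]

theorem coe_aeval_apply {L : Submodule R M} {f : Module.End R L} {a : A}
    (hf : ∀ x, (f x : M) = a • (x : M)) (P : R[X]) (x : L) :
    (aeval f P x : M) = aeval a P • (x : M) := by
  induction P using Polynomial.induction_on' generalizing x with
  | add P Q hP hQ => simp only [map_add, LinearMap.add_apply, Submodule.coe_add, hP, hQ, add_smul]
  | monomial n r =>
    have hpow : ((f ^ n) x : M) = a ^ n • (x : M) := by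
      induction n with
      | zero => simp
      | succ n ih => rw [pow_succ', pow_succ', Module.End.mul_apply, hf, ih, mul_smul]
    simp only [aeval_monomial, Module.End.mul_apply, Module.algebraMap_end_apply,
      Submodule.coe_smul, hpow, mul_smul, algebraMap_smul]

theorem exists_monic_aeval_smul_eq_zero {L : Submodule R M} (hL : L.FG) {a : A}
    (ha : ∀ x ∈ L, a • x ∈ L) : ∃ P : R[X], P.Monic ∧ ∀ x ∈ L, aeval a P • x = 0 := by
  have : Module.Finite R L := Module.Finite.iff_fg.mpr hL
  let f : Module.End R L := (Algebra.lsmul R R M a).restrict ha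
  obtain ⟨P, hP, hPf⟩ := LinearMap.exists_monic_and_aeval_eq_zero R f
  refine ⟨P, hP, fun x hx => ?_⟩
  rw [← coe_aeval_apply (f := f) (fun _ => rfl) P ⟨x, hx⟩, hPf, LinearMap.zero_apply,
    Submodule.coe_zero]

variable {K : Type*} [Field K] [Algebra R K] [Module K M] [IsScalarTower R K M]
  [SMulCommClass A K M]

theorem aeval_smul_eq_of_smul_eq {a : A} {μ : K} {v : M} (h : a • v = μ • v) (P : R[X]) :
    aeval a P • v = aeval μ P • v := by
  induction P using Polynomial.induction_on' with
  | add P Q hP hQ => simp only [map_add, add_smul, hP, hQ]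
  | monomial n r =>
    have hpow : a ^ n • v = μ ^ n • v := by
      induction n with
      | zero => simp
      | succ n ih => rw [pow_succ', mul_smul, ih, smul_comm, h, pow_succ, mul_smul]
    simp only [aeval_monomial, mul_smul, algebraMap_smul, hpow]

theorem isIntegral_of_smul_eq_of_isLattice {L : Submodule R M} [hL : L.IsLattice K] {a : A}
    (ha : ∀ x ∈ L, a • x ∈ L) {μ : K} {v : M} (hv : v ≠ 0) (h : a • v = μ • v) :
    IsIntegral R μ := by
  obtain ⟨P, hP, hPL⟩ := exists_monic_aeval_smul_eq_zero hL.fg ha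
  have hPM (x : M) : aeval a P • x = 0 := by
    induction hL.span_eq_top.ge (Submodule.mem_top (x := x)) using Submodule.span_induction with
    | mem x hx => exact hPL x hx
    | zero => exact smul_zero _
    | add x y _ _ hx hy => rw [smul_add, hx, hy, add_zero]
    | smul c x _ hx => rw [smul_comm, hx, smul_zero]
  exact ⟨P, hP, (smul_eq_zero_iff_left hv).mp (aeval_smul_eq_of_smul_eq h P ▸ hPM v)⟩

end Lattice

section Basis

variable {R M ι : Type*} [CommRing R] [AddCommGroup M] [Module R M] {L : Submodule R M} [Fintype ι]

theorem fg_of_forall_exists_eq_sum {b : ι → M} (hb : ∀ i, b i ∈ L)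
    (h : ∀ x ∈ L, ∃ c : ι → R, x = ∑ i, c i • b i) : L.FG := by
  suffices hspan : L = Submodule.span R (Set.range b) from
    hspan ▸ Submodule.fg_span (Set.finite_range b)
  refine le_antisymm (fun x hx => ?_) (Submodule.span_le.mpr (Set.range_subset_iff.mpr hb))
  obtain ⟨c, rfl⟩ := h x hx
  exact Submodule.sum_mem _ fun i _ =>
    Submodule.smul_mem _ (c i) (Submodule.subset_span (Set.mem_range_self i))

theorem existsUnique_eq_sum_of_basis (b : Module.Basis ι R L) {x : M} (hx : x ∈ L) :
    ∃! c : ι → R, x = ∑ i, c i • (b i : M) := by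
  have hcoe (c : ι → R) : ∑ i, c i • (b i : M) = (b.equivFun.symm c : L) := by
    simp only [b.equivFun_symm_apply, Submodule.coe_sum, Submodule.coe_smul]
  refine ⟨b.equivFun ⟨x, hx⟩, ?_, fun c hc => ?_⟩
  · simp only [hcoe, LinearEquiv.symm_apply_apply]
  · rw [← LinearEquiv.symm_apply_eq]
    exact Subtype.ext ((hcoe c).symm.trans hc.symm)

end Basis

section ValuationSubring

variable {E M : Type*} [Field E] (O : ValuationSubring E) [AddCommGroup M] [Module E M]

theorem free_of_fg {L : Submodule O M} (hL : L.FG) : Module.Free O L := by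
  have : Module.Finite O L := Module.Finite.iff_fg.mpr hL
  have : Module.IsTorsionFree O M := Module.IsTorsionFree.trans_faithfulSMul O E M
  have : Module.Flat O L := Module.Flat.flat_iff_torsion_eq_bot_of_isBezout.mpr
    (Submodule.isTorsionFree_iff_torsion_eq_bot.mp inferInstance)
  exact Module.free_of_flat_of_isLocalRing

theorem exists_forall_div_mem {ι : Type*} [Finite ι] [Nonempty ι] (a : ι → E) :
    ∃ k, ∀ i, a i / a k ∈ O := by
  obtain ⟨k, hk⟩ := Finite.exists_max fun i => O.valuation (a i)
  refine ⟨k, fun i => ?_⟩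
  rw [← O.valuation_le_one_iff, map_div₀]
  exact div_le_one_of_le₀ (hk i) zero_le

variable {O} in
theorem isLattice_iff_exists_basis {L : Submodule O M} :
    L.IsLattice E ↔
      (∃ (n : ℕ) (b : Fin n → M), (∀ i, b i ∈ L) ∧
        ∀ x ∈ L, ∃! c : Fin n → O, x = ∑ i, c i • b i) ∧
      ∃ (m : ℕ) (b : Module.Basis (Fin m) E M), ∀ i, b i ∈ L := by
  constructor
  · intro hL
    have : Module.Free O L := free_of_fg O hL.fg
    have : Module.Finite O L := Module.Finite.iff_fg.mpr hL.fg
    have b := Module.finBasis O L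
    refine ⟨⟨_, fun i => b i, fun i => (b i).2, fun x => existsUnique_eq_sum_of_basis b⟩,
      _, b.extendOfIsLattice E, fun i => ?_⟩
    rw [Module.Basis.extendOfIsLattice_apply]
    exact (b i).2
  · rintro ⟨⟨n, b, hb, hL⟩, m, bE, hbE⟩
    refine ⟨fg_of_forall_exists_eq_sum hb fun x hx => (hL x hx).exists, eq_top_iff.mpr ?_⟩
    rw [← bE.span_eq]
    exact Submodule.span_mono (Set.range_subset_iff.mpr hbE)

end ValuationSubring

section SpectralNorm

variable {K L : Type*} [NontriviallyNormedField K] [Field L] [Algebra K L]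
  {R : Type*} [CommRing R] [Algebra R K] [Algebra R L] [IsScalarTower R K L]
  (hR : ∀ x : K, ‖x‖ ≤ 1 → x ∈ (algebraMap R K).range) [Algebra.IsAlgebraic K L]

include hR

theorem isIntegral_of_spectralNorm_le_one {x : L} (hx : spectralNorm K L x ≤ 1) :
    IsIntegral R x := by
  have hm := minpoly.monic (Algebra.IsIntegral.isIntegral (R := K) x)
  rw [spectralNorm, spectralValue_le_one_iff hm] at hx
  obtain ⟨P, hP, -, hPm⟩ := Polynomial.lifts_and_degree_eq_and_monic
    ((Polynomial.lifts_iff_coeff_lifts _).mpr fun n => hR _ (hx n)) hm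
  refine ⟨P, hPm, ?_⟩
  rw [IsScalarTower.algebraMap_eq R K L, ← Polynomial.eval₂_map, hP]
  exact minpoly.aeval K x

theorem isIntegral_or_isIntegral_inv [IsUltrametricDist K] [CompleteSpace K] (x : L) :
    IsIntegral R x ∨ IsIntegral R x⁻¹ := by
  obtain rfl | hx := eq_or_ne x 0
  · exact Or.inl isIntegral_zero
  refine (le_total (spectralMulAlgNorm K L x) 1).imp (isIntegral_of_spectralNorm_le_one hR)
    fun h => isIntegral_of_spectralNorm_le_one hR ?_
  rw [← spectralMulAlgNorm_def]
  have hinv : spectralMulAlgNorm K L x * spectralMulAlgNorm K L x⁻¹ = 1 := by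
    rw [← map_mul, mul_inv_cancel₀ hx, map_one]
  rw [← hinv]
  exact le_mul_of_one_le_left (apply_nonneg _ _) h

end SpectralNorm

section SpanPow

variable {R A M : Type*} [CommRing R] [Ring A] [AddCommGroup M] [Module R M]
  [Module A M]

variable (R) in
/-- The `R`-span of the first `n` iterates `x, a x, …, aⁿ⁻¹ x` of a vector `x`. -/
def powSpan (a : A) (n : ℕ) (x : M) : Submodule R M :=
  Submodule.span R (Set.range fun i : Fin n => a ^ (i : ℕ) • x)

theorem fg_powSpan (a : A) (n : ℕ) (x : M) : (powSpan R a n x).FG :=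
  Submodule.fg_span (Set.finite_range _)

theorem pow_smul_mem_powSpan (a : A) {n i : ℕ} (hi : i < n) (x : M) :
    a ^ i • x ∈ powSpan R a n x :=
  Submodule.subset_span ⟨⟨i, hi⟩, rfl⟩

variable [Algebra R A] [IsScalarTower R A M]

theorem forall_smul_mem_span {a : A} {s : Set M}
    (h : ∀ x ∈ s, a • x ∈ Submodule.span R s) :
    ∀ x ∈ Submodule.span R s, a • x ∈ Submodule.span R s :=
  Submodule.span_le (p := (Submodule.span R s).comap (Algebra.lsmul R R M a)).mpr h

theorem forall_smul_mem_sup {a : A} {L L' : Submodule R M} (h : ∀ x ∈ L, a • x ∈ L)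
    (h' : ∀ x ∈ L', a • x ∈ L') : ∀ x ∈ L ⊔ L', a • x ∈ L ⊔ L' :=
  sup_le (c := (L ⊔ L').comap (Algebra.lsmul R R M a))
    (fun x hx => Submodule.mem_sup_left (h x hx)) fun x hx => Submodule.mem_sup_right (h' x hx)

theorem forall_smul_mem_powSpan {a : A} {n : ℕ} {x : M} (h : a ^ n • x ∈ powSpan R a n x) :
    ∀ z ∈ powSpan R a n x, a • z ∈ powSpan R a n x := by
  refine forall_smul_mem_span (Set.forall_mem_range.mpr fun i => ?_)
  rw [smul_smul, ← pow_succ']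
  obtain hi | hi := (Nat.succ_le_of_lt i.isLt).lt_or_eq
  · exact pow_smul_mem_powSpan a hi x
  · rwa [← Nat.succ_eq_add_one, hi]

theorem forall_inv_smul_mem_powSpan {a b : A} (hba : b * a = 1) {n : ℕ} {x : M}
    (h : b • x ∈ powSpan R a n x) : ∀ z ∈ powSpan R a n x, b • z ∈ powSpan R a n x := by
  refine forall_smul_mem_span (Set.forall_mem_range.mpr ?_)
  rintro ⟨_ | i, hi⟩
  · rwa [pow_zero, one_smul]
  · rw [smul_smul, pow_succ', ← mul_assoc, hba, one_mul]
    exact pow_smul_mem_powSpan a (Nat.lt_of_succ_lt hi) x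

end SpanPow

section Eigencharacter

variable {K A V : Type*} [CommRing K] [Ring A] [Algebra K A] [AddCommGroup V] [Module K V]

theorem apply_eq_smul_of_adjoin (ρ : A →ₐ[K] Module.End K V) {s : Set A}
    (χ : Algebra.adjoin K s →ₐ[K] K) {w : V}
    (h : ∀ (a : A) (ha : a ∈ s), ρ a w = χ ⟨a, Algebra.subset_adjoin ha⟩ • w)
    (a : Algebra.adjoin K s) : ρ a w = χ a • w := by
  obtain ⟨a, ha⟩ := a
  induction ha using Algebra.adjoin_induction with
  | mem a ha => exact h a ha
  | algebraMap r =>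
    have hr := χ.commutes r
    rw [AlgHom.commutes, Module.algebraMap_end_apply]
    exact congrArg (· • w) hr.symm
  | add a b ha hb ha' hb' =>
    have hab := map_add χ ⟨a, ha⟩ ⟨b, hb⟩
    rw [map_add, LinearMap.add_apply, ha', hb', ← add_smul, ← hab]
    rfl
  | mul a b ha hb ha' hb' =>
    have hab := map_mul χ ⟨a, ha⟩ ⟨b, hb⟩
    rw [map_mul, Module.End.mul_apply, hb', map_smul, ha', smul_smul, mul_comm, ← hab]
    rfl

theorem apply_eq_smul_of_mul_eq_one (ρ : A →ₐ[K] Module.End K V) {a b : A} (hba : b * a = 1)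
    {α β : K} (hαβ : α * β = 1) {w : V} (ha : ρ a w = α • w) : ρ b w = β • w := by
  calc ρ b w = β • ρ b (ρ a w) := by
        rw [ha, map_smul, smul_smul, mul_comm, hαβ, one_smul]
    _ = β • w := by rw [← Module.End.mul_apply, ← map_mul, hba, map_one, Module.End.one_apply]

end Eigencharacter

namespace HeckeAlg

theorem smul_smul_of_mul_eq_one {R M : Type*} [Monoid R] [MulAction R M] {r s : R}
    (h : r * s = 1) (x : M) : r • s • x = x := by
  rw [smul_smul, h, one_smul]

section QuadraticRelation

variable {R A : Type*} [CommRing R] [Ring A] [Algebra R A] (q : R)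

/-- For `S` with `(S + 1)(S - q) = 0`, this is `q S⁻¹ = S - q + 1`, which makes sense without
inverting `q`. -/
def qInv (S : A) : A := S - algebraMap R A q + 1

variable {q} {S : A} (hS : (S + 1) * (S - algebraMap R A q) = 0)

include hS

theorem mul_qInv : S * qInv q S = q • 1 := by
  rw [← sub_eq_zero, ← hS, qInv, ← Algebra.algebraMap_eq_smul_one]
  noncomm_ring

theorem qInv_mul : qInv q S * S = q • 1 := by
  rw [← mul_qInv hS, qInv, add_mul, sub_mul, Algebra.commutes]
  noncomm_ring

theorem mul_qInv_mul (x : A) : S * (qInv q S * x) = q • x := by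
  rw [← mul_assoc, mul_qInv hS, smul_one_mul]

theorem qInv_mul_mul (x : A) : qInv q S * (S * x) = q • x := by
  rw [← mul_assoc, qInv_mul hS, smul_one_mul]

end QuadraticRelation

section Relations

variable (R : Type) [CommRing R] (q : R)

theorem isUnit_T : IsUnit (T R q) :=
  ⟨⟨T R q, Tinv R q, T_mul_Tinv R q, Tinv_mul_T R q⟩, rfl⟩

theorem S2_eq : S2 R q = Tinv R q * S1 R q * T R q := by
  rw [mul_assoc, ← T_mul_S2, ← mul_assoc, Tinv_mul_T, one_mul]

theorem S2_quad_rel : (S2 R q + 1) * (S2 R q - algebraMap R (HeckeAlg R q) q) = 0 := by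
  refine (isUnit_T R q).mul_right_eq_zero.mp ?_
  have hadd : T R q * (S2 R q + 1) = (S1 R q + 1) * T R q := by
    rw [mul_add, add_mul, T_mul_S2, mul_one, one_mul]
  have hsub : T R q * (S2 R q - algebraMap R _ q) = (S1 R q - algebraMap R _ q) * T R q := by
    rw [mul_sub, sub_mul, T_mul_S2, Algebra.commutes]
  rw [← mul_assoc, hadd, mul_assoc, hsub, ← mul_assoc, quad_rel, zero_mul]

theorem T_mul_qInv_S2 : T R q * qInv q (S2 R q) = qInv q (S1 R q) * T R q := by
  rw [qInv, qInv, mul_add, mul_sub, add_mul, sub_mul, T_mul_S2, Algebra.commutes, mul_one, one_mul]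

theorem T_sq_mul_S1 : T R q ^ 2 * S1 R q = S2 R q * T R q ^ 2 := by
  refine (isUnit_T R q).mul_left_cancel ?_
  rw [← mul_assoc, ← mul_assoc, ← pow_succ', T3_mul_S1, T_mul_S2, mul_assoc, ← pow_succ']

theorem T3_mul_S2 : T R q ^ 3 * S2 R q = S2 R q * T R q ^ 3 := by
  rw [pow_succ, mul_assoc, T_mul_S2, ← mul_assoc, T_sq_mul_S1, mul_assoc]

/-- The elements `q Y_i⁻¹`. -/
noncomputable def qYinv : Fin 3 → HeckeAlg R q :=
  ![Tinv R q * S2 R q * S1 R q, qInv q (S1 R q) * Tinv R q * S2 R q,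
    qInv q (S2 R q) * qInv q (S1 R q) * Tinv R q]

variable {q} {qi : R}

theorem Y_one_eq : Y R q qi 1 = qi • (qInv q (S2 R q) * T R q * S1 R q) := by
  simp [Y, S2i, qInv, Algebra.smul_def, mul_assoc]

theorem Y_two_eq : Y R q qi 2 = qi • (T R q * S1 R q * S2 R q) := by
  simp [Y, Algebra.smul_def, mul_assoc]

variable (hq : qi * q = 1)

include hq

theorem Y_zero_eq : Y R q qi 0 = qi • (qInv q (S1 R q) * qInv q (S2 R q) * T R q) := by
  simp only [Y, S1i, S2i, ← Algebra.smul_def, Matrix.cons_val_zero, smul_mul_assoc, mul_smul_comm,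
    smul_smul_of_mul_eq_one hq, qInv]

theorem qYinv_mul_Y (i : Fin 3) : qYinv R q i * Y R q qi i = q • 1 := by
  have hT (x : HeckeAlg R q) : Tinv R q * (T R q * x) = x := by
    rw [← mul_assoc, Tinv_mul_T, one_mul]
  fin_cases i <;>
    simp [qYinv, Y_zero_eq R hq, Y_one_eq, Y_two_eq, mul_assoc, smul_smul_of_mul_eq_one hq, hT,
      Tinv_mul_T, mul_qInv_mul (quad_rel R q), mul_qInv_mul (S2_quad_rel R q),
      qInv_mul (quad_rel R q), qInv_mul_mul (quad_rel R q), qInv_mul (S2_quad_rel R q)]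

theorem Y_mul_Y_mul_Y : Y R q qi 0 * Y R q qi 1 * Y R q qi 2 = T R q ^ 3 := by
  have hword : T R q * qInv q (S2 R q) * T R q * S1 R q * (T R q * S1 R q * S2 R q) =
      qInv q (S1 R q) * (S1 R q * S2 R q * S1 R q) * T R q ^ 3 :=
    calc _ = qInv q (S1 R q) * (T R q ^ 2 * S1 R q) * T R q * S1 R q * S2 R q := by
          rw [T_mul_qInv_S2]
          simp only [pow_two, mul_assoc]
      _ = qInv q (S1 R q) * S2 R q * (T R q ^ 3 * S1 R q) * S2 R q := by
          rw [T_sq_mul_S1]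
          simp only [pow_succ, mul_assoc]
      _ = qInv q (S1 R q) * S2 R q * S1 R q * (T R q ^ 3 * S2 R q) := by
          rw [T3_mul_S1]
          simp only [mul_assoc]
      _ = qInv q (S1 R q) * (S1 R q * S2 R q * S1 R q) * T R q ^ 3 := by
          rw [T3_mul_S2, braid_rel]
          simp only [mul_assoc]
  calc Y R q qi 0 * Y R q qi 1 * Y R q qi 2
      = qi • qi • qi • (qInv q (S1 R q) * qInv q (S2 R q) *
          (T R q * qInv q (S2 R q) * T R q * S1 R q * (T R q * S1 R q * S2 R q))) := by
        simp only [Y_zero_eq R hq, Y_one_eq, Y_two_eq, smul_mul_assoc, mul_smul_comm, mul_assoc]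
    _ = T R q ^ 3 := by
        rw [hword]
        simp only [mul_assoc, qInv_mul_mul (quad_rel R q), qInv_mul_mul (S2_quad_rel R q),
          smul_mul_assoc, mul_smul_comm, smul_smul_of_mul_eq_one hq]

theorem S2_mul_S1_mul_Y_zero : S2 R q * S1 R q * Y R q qi 0 = q • T R q := by
  simp only [Y_zero_eq R hq, mul_assoc, mul_smul_comm, mul_qInv_mul (quad_rel R q),
    mul_qInv_mul (S2_quad_rel R q), smul_smul_of_mul_eq_one hq]

theorem S2_mul_Y_one : S2 R q * Y R q qi 1 = T R q * S1 R q := by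
  simp only [Y_one_eq, mul_smul_comm, mul_assoc, mul_qInv_mul (S2_quad_rel R q),
    smul_smul_of_mul_eq_one hq]

end Relations

section IntegralForm

variable (R : Type*) {S : Type} [CommRing R] [CommRing S] [Algebra R S] (q : S)

/-- The `R`-subalgebra of `H_S` generated by `T`, `T⁻¹`, `S_1`, `S_2`. For `R = O_E` it is the image
of `H ⊗ O_E`, so that an `O_E`-lattice is stable under `H` if and only if it is stable under
`integralForm O_E q`. -/
noncomputable def integralForm : Subalgebra R (HeckeAlg S q) :=
  Algebra.adjoin R (Set.range (gen S q))

theorem gen_mem_integralForm (i : Fin 4) : gen S q i ∈ integralForm R q :=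
  Algebra.subset_adjoin ⟨i, rfl⟩

theorem integralForm_self {R₀ : Type} [CommRing R₀] (q : R₀) : integralForm R₀ q = ⊤ := by
  have hrange : Set.range (gen R₀ q) =
      RingQuot.mkAlgHom R₀ (HeckeRel R₀ q) '' Set.range (FreeAlgebra.ι R₀) :=
    Set.range_comp _ _
  rw [integralForm, hrange, ← AlgHom.map_adjoin, FreeAlgebra.adjoin_range_ι, Algebra.map_top,
    AlgHom.range_eq_top]
  exact RingQuot.mkAlgHom_surjective _ _

variable {R q} in
theorem forall_integralForm_smul_mem {M : Type*} [AddCommGroup M] [Module R M]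
    [Module (HeckeAlg S q) M] [IsScalarTower R (HeckeAlg S q) M] {L : Submodule R M}
    (hT : ∀ x ∈ L, T S q • x ∈ L) (hTinv : ∀ x ∈ L, Tinv S q • x ∈ L)
    (hS1 : ∀ x ∈ L, S1 S q • x ∈ L) {h : HeckeAlg S q} (hh : h ∈ integralForm R q) :
    ∀ x ∈ L, h • x ∈ L := by
  induction hh using Algebra.adjoin_induction with
  | mem _ hgen =>
    obtain ⟨i, rfl⟩ := hgen
    fin_cases i
    · exact hT
    · exact hTinv
    · exact hS1
    · change ∀ x ∈ L, S2 S q • x ∈ L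
      intro x hx
      rw [S2_eq, mul_smul, mul_smul]
      exact hTinv _ (hS1 _ (hT x hx))
  | algebraMap r =>
    intro x hx
    rw [algebraMap_smul]
    exact L.smul_mem r hx
  | add a b _ _ ha hb => exact fun x hx => add_smul a b x ▸ L.add_mem (ha x hx) (hb x hx)
  | mul a b _ _ ha hb => exact fun x hx => mul_smul a b x ▸ ha _ (hb x hx)

variable {R q} (hq : q ∈ (algebraMap R S).range)

include hq

theorem algebraMap_mem_integralForm : algebraMap S (HeckeAlg S q) q ∈ integralForm R q := by
  obtain ⟨r, rfl⟩ := hq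
  rw [← IsScalarTower.algebraMap_apply]
  exact Subalgebra.algebraMap_mem _ r

theorem qInv_mem_integralForm {a : HeckeAlg S q} (ha : a ∈ integralForm R q) :
    qInv q a ∈ integralForm R q :=
  add_mem (sub_mem ha (algebraMap_mem_integralForm hq)) (one_mem _)

theorem qYinv_mem_integralForm (i : Fin 3) : qYinv S q i ∈ integralForm R q := by
  have hTinv : Tinv S q ∈ integralForm R q := gen_mem_integralForm R q 1
  have hS1 : S1 S q ∈ integralForm R q := gen_mem_integralForm R q 2
  have hS2 : S2 S q ∈ integralForm R q := gen_mem_integralForm R q 3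
  have hS1' := qInv_mem_integralForm hq hS1
  have hS2' := qInv_mem_integralForm hq hS2
  fin_cases i
  · exact mul_mem (mul_mem hTinv hS2) hS1
  · exact mul_mem (mul_mem hS1' hTinv) hS2
  · exact mul_mem (mul_mem hS2' hS1') hTinv

theorem smul_Y_mem_integralForm {qi : S} (hqi : qi * q = 1) (i : Fin 3) :
    q • Y S q qi i ∈ integralForm R q := by
  have hT : T S q ∈ integralForm R q := gen_mem_integralForm R q 0
  have hS1 : S1 S q ∈ integralForm R q := gen_mem_integralForm R q 2
  have hS2 : S2 S q ∈ integralForm R q := gen_mem_integralForm R q 3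
  have hS1' := qInv_mem_integralForm hq hS1
  have hS2' := qInv_mem_integralForm hq hS2
  have hcancel := smul_smul_of_mul_eq_one (M := HeckeAlg S q) (mul_comm qi q ▸ hqi)
  fin_cases i
  · simpa only [Fin.zero_eta, Y_zero_eq S hqi, hcancel] using mul_mem (mul_mem hS1' hS2') hT
  · simpa only [Fin.mk_one, Y_one_eq, hcancel] using mul_mem (mul_mem hS2' hT) hS1
  · simpa only [Fin.reduceFinMk, Y_two_eq, hcancel] using mul_mem (mul_mem hT hS1) hS2

end IntegralForm

section Map

variable {R S : Type} [CommRing R] [CommRing S] (φ : R →+* S) (q : R) {q' : S} (h : φ q = q')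

theorem map_gen (i : Fin 4) : map φ q q' h (gen R q i) = gen S q' i := by
  subst h
  simp only [map, gen, RingQuot.mkAlgHom]
  -- `map` is defined through this instance, which has to be in scope for its lift to be unfolded.
  let : Algebra R (HeckeAlg S (φ q)) :=
    RingHom.toAlgebra' ((algebraMap S (HeckeAlg S (φ q))).comp φ)
      (fun c x => by simpa using Algebra.commutes (φ c) x)
  exact (RingQuot.lift_mkRingHom_apply _ _ _).trans (FreeAlgebra.lift_ι_apply _ _)

theorem map_algebraMap (c : R) :
    map φ q q' h (algebraMap R (HeckeAlg R q) c) = algebraMap S (HeckeAlg S q') (φ c) := by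
  subst h
  rw [← AlgHom.commutes (RingQuot.mkAlgHom R (HeckeRel R q))]
  simp only [map, RingQuot.mkAlgHom]
  let : Algebra R (HeckeAlg S (φ q)) :=
    RingHom.toAlgebra' ((algebraMap S (HeckeAlg S (φ q))).comp φ)
      (fun c x => by simpa using Algebra.commutes (φ c) x)
  exact (RingQuot.lift_mkRingHom_apply _ _ _).trans (AlgHom.commutes _ _)

theorem map_mem_integralForm {R₀ : Type*} [CommRing R₀] [Algebra R₀ S]
    (hφ : ∀ c, φ c ∈ (algebraMap R₀ S).range) (a : HeckeAlg R q) :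
    map φ q q' h a ∈ integralForm R₀ q' := by
  have ha : a ∈ integralForm R q := (integralForm_self q).symm ▸ Algebra.mem_top
  induction ha using Algebra.adjoin_induction with
  | mem _ hgen =>
    obtain ⟨i, rfl⟩ := hgen
    rw [map_gen]
    exact gen_mem_integralForm R₀ q' i
  | algebraMap c =>
    obtain ⟨r, hr⟩ := hφ c
    rw [map_algebraMap, ← hr, ← IsScalarTower.algebraMap_apply]
    exact Subalgebra.algebraMap_mem _ r
  | add a b _ _ ha hb => exact map_add (map φ q q' h) a b ▸ add_mem ha hb
  | mul a b _ _ ha hb => exact map_mul (map φ q q' h) a b ▸ mul_mem ha hb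

end Map

section Eigenvector

variable {E : Type} {M : Type*} [Field E] {q : E} [AddCommGroup M] [Module E M]
  [Module (HeckeAlg E q) M] [IsScalarTower E (HeckeAlg E q) M] {v : M} {y : Fin 3 → E}
  (hq : q ≠ 0) (hY : ∀ i, Y E q q⁻¹ i • v = y i • v)

theorem S1_smul_S1_smul (x : M) : S1 E q • S1 E q • x = (q - 1) • S1 E q • x + q • x := by
  have h : S1 E q • qInv q (S1 E q) • x = q • x := by
    rw [smul_smul, mul_qInv (quad_rel E q), smul_assoc, one_smul]
  rw [← h, qInv, add_smul, sub_smul (S1 E q), one_smul, algebraMap_smul, smul_add, smul_sub,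
    smul_comm _ q, sub_smul, one_smul]
  abel

include hq hY

theorem smul_qYinv_smul (i : Fin 3) : y i • qYinv E q i • v = q • v := by
  rw [smul_comm, ← hY, smul_smul, qYinv_mul_Y E (inv_mul_cancel₀ hq), smul_assoc, one_smul]

theorem T_pow_three_smul : T E q ^ 3 • v = (y 0 * y 1 * y 2) • v := by
  rw [← Y_mul_Y_mul_Y E (inv_mul_cancel₀ hq), mul_smul, mul_smul, hY, smul_comm (Y E q q⁻¹ 1),
    hY, smul_comm (Y E q q⁻¹ 0), smul_comm (Y E q q⁻¹ 0), hY, smul_smul, smul_smul]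
  ring_nf

theorem smul_S1_smul_T_smul_S1_smul :
    y 0 • S1 E q • T E q • S1 E q • v = q • T E q ^ 2 • v := by
  have h : y 0 • S2 E q • S1 E q • v = q • T E q • v := by
    rw [smul_comm _ (S2 E q), smul_comm _ (S1 E q), ← hY, smul_smul, smul_smul,
      S2_mul_S1_mul_Y_zero E (inv_mul_cancel₀ hq), smul_assoc]
  rw [← mul_smul (S1 E q), ← T_mul_S2, mul_smul, smul_comm, h, smul_comm, pow_two, mul_smul]

theorem smul_S1_smul_T_smul : y 1 • S1 E q • T E q • v = T E q ^ 2 • S1 E q • v := by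
  have h : y 1 • S2 E q • v = T E q • S1 E q • v := by
    rw [smul_comm, ← hY, smul_smul, S2_mul_Y_one E (inv_mul_cancel₀ hq), mul_smul]
  rw [← mul_smul (S1 E q), ← T_mul_S2, mul_smul, smul_comm, h, pow_two, mul_smul]

section NonZero

variable (hv : v ≠ 0)

include hv

theorem eigenvalue_ne_zero (i : Fin 3) : y i ≠ 0 := fun h =>
  smul_ne_zero hq hv (by rw [← smul_qYinv_smul hq hY i, h, zero_smul])

theorem qYinv_smul (i : Fin 3) : qYinv E q i • v = (q * (y i)⁻¹) • v := by
  rw [← inv_smul_smul₀ (eigenvalue_ne_zero hq hY hv i) (qYinv E q i • v), smul_qYinv_smul hq hY,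
    smul_smul, mul_comm]

end NonZero

end Eigenvector

section StableLattice

variable {E : Type} {M : Type*} [Field E] {O : ValuationSubring E} {q : E} [AddCommGroup M]
  [Module E M] [Module (HeckeAlg E q) M] [IsScalarTower E (HeckeAlg E q) M]

instance : IsScalarTower O (HeckeAlg E q) M :=
  IsScalarTower.of_algebraMap_smul fun c x => by
    rw [IsScalarTower.algebraMap_apply O E (HeckeAlg E q), algebraMap_smul]
    rfl

theorem Tinv_smul_of_T_pow_three_smul {t : E} (ht : t ≠ 0) {x : M} (h : T E q ^ 3 • x = t • x) :
    Tinv E q • x = t⁻¹ • T E q ^ 2 • x := by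
  rw [← inv_smul_smul₀ ht (Tinv E q • x), smul_comm t, ← h, smul_smul, pow_succ', ← mul_assoc,
    Tinv_mul_T, one_mul]

theorem Tinv_pow_three_smul_of_T_pow_three_smul {t : E} (ht : t ≠ 0) {x : M}
    (h : T E q ^ 3 • x = t • x) : Tinv E q ^ 3 • x = t⁻¹ • x := by
  rw [← inv_smul_smul₀ ht (Tinv E q ^ 3 • x), smul_comm t, ← h, smul_smul,
    pow_mul_pow_eq_one 3 (Tinv_mul_T E q), one_smul]

section Eigenvalues

variable {L : Submodule O M} [L.IsLattice E] (hL : ∀ h ∈ integralForm O q, ∀ x ∈ L, h • x ∈ L)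
  {v : M} (hv : v ≠ 0)

include hL hv

theorem mem_of_smul_eq_smul {h : HeckeAlg E q} (hh : h ∈ integralForm O q) {μ : E}
    (hμ : h • v = μ • v) : μ ∈ O := by
  obtain ⟨μ', rfl⟩ := IsIntegrallyClosed.isIntegral_iff.mp
    (isIntegral_of_smul_eq_of_isLattice (hL h hh) hv hμ)
  exact μ'.2

variable (hq : q ≠ 0) (hqO : q ∈ O) {y : Fin 3 → E} (hY : ∀ i, Y E q q⁻¹ i • v = y i • v)

include hq hY

theorem eigenvalue_prod_mem : y 0 * y 1 * y 2 ∈ O :=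
  mem_of_smul_eq_smul hL hv (pow_mem (gen_mem_integralForm O q 0) 3) (T_pow_three_smul hq hY)

theorem inv_eigenvalue_prod_mem : (y 0 * y 1 * y 2)⁻¹ ∈ O := by
  have hy := eigenvalue_ne_zero hq hY hv
  exact mem_of_smul_eq_smul hL hv (pow_mem (gen_mem_integralForm O q 1) 3)
    (Tinv_pow_three_smul_of_T_pow_three_smul (mul_ne_zero (mul_ne_zero (hy 0) (hy 1)) (hy 2))
      (T_pow_three_smul hq hY))

include hqO

theorem q_mul_eigenvalue_mem (i : Fin 3) : q * y i ∈ O := by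
  have hqO' : q ∈ (algebraMap O E).range := ⟨⟨q, hqO⟩, rfl⟩
  have hqY : (q • Y E q q⁻¹ i) • v = (q * y i) • v := by rw [smul_assoc, hY, smul_smul]
  exact mem_of_smul_eq_smul hL hv (smul_Y_mem_integralForm hqO' (inv_mul_cancel₀ hq) i) hqY

theorem q_mul_inv_eigenvalue_mem (i : Fin 3) : q * (y i)⁻¹ ∈ O := by
  have hqO' : q ∈ (algebraMap O E).range := ⟨⟨q, hqO⟩, rfl⟩
  exact mem_of_smul_eq_smul hL hv (qYinv_mem_integralForm hqO' i) (qYinv_smul hq hY hv i)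

end Eigenvalues

section IntegralLattice

theorem S1_smul_mem_of_S1_smul_eq {L : Submodule O M} {x z : M} (hx : x ∈ L) (hz : z ∈ L) {α : E}
    (hα : α ≠ 0) (hαO : α ∈ O) (hqO : q ∈ O) (hqα : q * α⁻¹ ∈ O) (h : S1 E q • x = α • z) :
    S1 E q • x ∈ L ∧ S1 E q • z ∈ L := by
  have hS1z : S1 E q • z = (q - 1) • z + (q * α⁻¹) • x := by
    rw [← inv_smul_smul₀ hα (S1 E q • z), smul_comm α, ← h, S1_smul_S1_smul, h, smul_add,
      smul_comm (q - 1), inv_smul_smul₀ hα, smul_smul, mul_comm]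
  rw [hS1z, h]
  exact ⟨L.smul_mem ⟨α, hαO⟩ hz, L.add_mem (L.smul_mem ⟨q - 1, sub_mem hqO (one_mem O)⟩ hz)
    (L.smul_mem ⟨q * α⁻¹, hqα⟩ hx)⟩

theorem T_smul_mem_powSpan {t : E} (ht : t ∈ O) {x : M} (hx : T E q ^ 3 • x = t • x) :
    ∀ z ∈ powSpan O (T E q) 3 x, T E q • z ∈ powSpan O (T E q) 3 x := by
  have hx0 : x ∈ powSpan O (T E q) 3 x := by
    simpa only [pow_zero, one_smul] using pow_smul_mem_powSpan (T E q) three_pos x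
  exact forall_smul_mem_powSpan (hx ▸ Submodule.smul_mem _ (⟨t, ht⟩ : O) hx0)

theorem Tinv_smul_mem_powSpan {t : E} (ht0 : t ≠ 0) (ht : t⁻¹ ∈ O) {x : M}
    (hx : T E q ^ 3 • x = t • x) :
    ∀ z ∈ powSpan O (T E q) 3 x, Tinv E q • z ∈ powSpan O (T E q) 3 x := by
  refine forall_inv_smul_mem_powSpan (Tinv_mul_T E q) ?_
  rw [Tinv_smul_of_T_pow_three_smul ht0 hx]
  exact (powSpan O (T E q) 3 x).smul_mem ⟨t⁻¹, ht⟩ (pow_smul_mem_powSpan (T E q) (by lia) x)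

variable (O q) in
/-- The lattice spanned by `v, T v, T² v` and the multiples by `d` of `S_1 v, T S_1 v, T² S_1 v`. -/
noncomputable def integralLattice (d : E) (v : M) : Submodule O M :=
  powSpan O (T E q) 3 v ⊔ powSpan O (T E q) 3 (d • S1 E q • v)

variable {v : M} {y : Fin 3 → E} (hq : q ≠ 0) (hY : ∀ i, Y E q q⁻¹ i • v = y i • v)

include hq hY

theorem T_pow_three_smul_S1_smul (d : E) :
    T E q ^ 3 • d • S1 E q • v = (y 0 * y 1 * y 2) • d • S1 E q • v := by
  rw [smul_comm _ d, smul_smul (T E q ^ 3), T3_mul_S1, mul_smul, T_pow_three_smul hq hY,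
    smul_comm _ (y 0 * y 1 * y 2), smul_comm d]

theorem T_smul_mem_integralLattice (ht : y 0 * y 1 * y 2 ∈ O) (d : E) :
    ∀ x ∈ integralLattice O q d v, T E q • x ∈ integralLattice O q d v :=
  forall_smul_mem_sup (T_smul_mem_powSpan ht (T_pow_three_smul hq hY))
    (T_smul_mem_powSpan ht (T_pow_three_smul_S1_smul hq hY d))

theorem Tinv_smul_mem_integralLattice (ht0 : y 0 * y 1 * y 2 ≠ 0) (ht : (y 0 * y 1 * y 2)⁻¹ ∈ O)
    (d : E) : ∀ x ∈ integralLattice O q d v, Tinv E q • x ∈ integralLattice O q d v :=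
  forall_smul_mem_sup (Tinv_smul_mem_powSpan ht0 ht (T_pow_three_smul hq hY))
    (Tinv_smul_mem_powSpan ht0 ht (T_pow_three_smul_S1_smul hq hY d))

theorem S1_smul_T_smul_smul_S1_smul (hy0 : y 0 ≠ 0) (d : E) :
    S1 E q • T E q • d • S1 E q • v = (q * (d / y 0)) • T E q ^ 2 • v := by
  rw [smul_comm (T E q) d, smul_comm (S1 E q) d, ← inv_smul_smul₀ hy0 (S1 E q • T E q • _),
    smul_S1_smul_T_smul_S1_smul hq hY, smul_smul, smul_smul]
  congr 1
  ring

theorem S1_smul_T_smul (hy1 : y 1 ≠ 0) {d : E} (hd : d ≠ 0) :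
    S1 E q • T E q • v = ((y 1)⁻¹ / d) • T E q ^ 2 • d • S1 E q • v := by
  rw [← inv_smul_smul₀ hy1 (S1 E q • _), smul_S1_smul_T_smul hq hY, smul_comm (T E q ^ 2) d,
    smul_smul _ d, div_mul_cancel₀ _ hd]

theorem S1_smul_mem_integralLattice (hqO : q ∈ O) (hy : ∀ i, y i ≠ 0) {d : E} (hd : d ≠ 0)
    (hdiv : ∀ i : Fin 3, ![1, y 0, (y 1)⁻¹] i / d ∈ O)
    (hqdiv : ∀ i : Fin 3, q * (d / ![1, y 0, (y 1)⁻¹] i) ∈ O) :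
    ∀ x ∈ integralLattice O q d v, S1 E q • x ∈ integralLattice O q d v := by
  have hmem_v (i : ℕ) (hi : i < 3) : T E q ^ i • v ∈ integralLattice O q d v :=
    Submodule.mem_sup_left (pow_smul_mem_powSpan _ hi v)
  have hmem_S1 (i : ℕ) (hi : i < 3) : T E q ^ i • d • S1 E q • v ∈ integralLattice O q d v :=
    Submodule.mem_sup_right (pow_smul_mem_powSpan _ hi _)
  have hS1v : S1 E q • T E q ^ 0 • v = (1 / d) • T E q ^ 0 • d • S1 E q • v := by
    rw [pow_zero, one_smul, one_smul, one_div, inv_smul_smul₀ hd]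
  have hq0 : q * (q * (d / y 0))⁻¹ ∈ O := by
    rw [mul_inv, mul_inv_cancel_left₀ hq, inv_div]
    exact hdiv 1
  obtain ⟨hv0, hS0⟩ := S1_smul_mem_of_S1_smul_eq (hmem_v 0 (by lia)) (hmem_S1 0 (by lia))
    (one_div_ne_zero hd) (hdiv 0) hqO (inv_div 1 d ▸ hqdiv 0) hS1v
  obtain ⟨hS1, hv2⟩ := S1_smul_mem_of_S1_smul_eq (hmem_S1 1 (by lia)) (hmem_v 2 (by lia))
    (mul_ne_zero hq (div_ne_zero hd (hy 0))) (hqdiv 1) hqO hq0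
    ((pow_one (T E q)).symm ▸ S1_smul_T_smul_smul_S1_smul hq hY (hy 0) d)
  obtain ⟨hv1, hS2⟩ := S1_smul_mem_of_S1_smul_eq (hmem_v 1 (by lia)) (hmem_S1 2 (by lia))
    (div_ne_zero (inv_ne_zero (hy 1)) hd) (hdiv 2) hqO (inv_div (y 1)⁻¹ d ▸ hqdiv 2)
    ((pow_one (T E q)).symm ▸ S1_smul_T_smul hq hY (hy 1) hd)
  refine sup_le (c := (integralLattice O q d v).comap (Algebra.lsmul O O M (S1 E q)))
    (Submodule.span_le.mpr (Set.range_subset_iff.mpr fun i => ?_))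
    (Submodule.span_le.mpr (Set.range_subset_iff.mpr fun i => ?_))
  · fin_cases i
    exacts [hv0, hv1, hv2]
  · fin_cases i
    exacts [hS0, hS1, hS2]

end IntegralLattice

section Existence

variable {v : M} (hgen : Submodule.span (HeckeAlg E q) {v} = ⊤)

include hgen

theorem span_eq_top_of_stable {L : Submodule O M} (hvL : v ∈ L) (hT : ∀ x ∈ L, T E q • x ∈ L)
    (hTinv : ∀ x ∈ L, Tinv E q • x ∈ L) (hS1 : ∀ x ∈ L, S1 E q • x ∈ L) :
    Submodule.span E (L : Set M) = ⊤ := by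
  have hstable (h : HeckeAlg E q) :
      ∀ x ∈ Submodule.span E (L : Set M), h • x ∈ Submodule.span E (L : Set M) := by
    refine forall_integralForm_smul_mem (R := E) ?_ ?_ ?_
      ((integralForm_self q).symm ▸ Algebra.mem_top)
    exacts [forall_smul_mem_span fun x hx => Submodule.subset_span (hT x hx),
      forall_smul_mem_span fun x hx => Submodule.subset_span (hTinv x hx),
      forall_smul_mem_span fun x hx => Submodule.subset_span (hS1 x hx)]
  refine eq_top_iff.mpr fun x _ => ?_
  obtain ⟨h, rfl⟩ := Submodule.mem_span_singleton.mp (hgen ▸ Submodule.mem_top (x := x))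
  exact hstable h v (Submodule.subset_span hvL)

variable {y : Fin 3 → E} (hq : q ≠ 0) (hY : ∀ i, Y E q q⁻¹ i • v = y i • v)

include hq hY

theorem exists_isLattice_of_scale (hqO : q ∈ O) (hy : ∀ i, y i ≠ 0) (ht : y 0 * y 1 * y 2 ∈ O)
    (htinv : (y 0 * y 1 * y 2)⁻¹ ∈ O) {d : E} (hd : d ≠ 0)
    (hdiv : ∀ i : Fin 3, ![1, y 0, (y 1)⁻¹] i / d ∈ O)
    (hqdiv : ∀ i : Fin 3, q * (d / ![1, y 0, (y 1)⁻¹] i) ∈ O) :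
    ∃ L : Submodule O M, L.IsLattice E ∧ ∀ h ∈ integralForm O q, ∀ x ∈ L, h • x ∈ L := by
  have ht0 : y 0 * y 1 * y 2 ≠ 0 := mul_ne_zero (mul_ne_zero (hy 0) (hy 1)) (hy 2)
  have hT := T_smul_mem_integralLattice (O := O) hq hY ht d
  have hTinv := Tinv_smul_mem_integralLattice (O := O) hq hY ht0 htinv d
  have hS1 := S1_smul_mem_integralLattice hq hY hqO hy hd hdiv hqdiv
  have hv : v ∈ integralLattice O q d v :=
    Submodule.mem_sup_left (by simpa using pow_smul_mem_powSpan (R := O) (T E q) three_pos v)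
  exact ⟨integralLattice O q d v, ⟨(fg_powSpan _ _ _).sup (fg_powSpan _ _ _),
    span_eq_top_of_stable hgen hv hT hTinv hS1⟩,
    fun h hh => forall_integralForm_smul_mem hT hTinv hS1 hh⟩

theorem exists_isLattice (hqO : q ∈ O) (hy : ∀ i, y i ≠ 0) (ht : y 0 * y 1 * y 2 ∈ O)
    (htinv : (y 0 * y 1 * y 2)⁻¹ ∈ O) (h01 : q * (y 0 * y 1) ∈ O) (h01' : q * (y 0 * y 1)⁻¹ ∈ O)
    (hqy : ∀ i, q * y i ∈ O) (hqy' : ∀ i, q * (y i)⁻¹ ∈ O) :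
    ∃ L : Submodule O M, L.IsLattice E ∧ ∀ h ∈ integralForm O q, ∀ x ∈ L, h • x ∈ L := by
  have ha (i : Fin 3) : ![1, y 0, (y 1)⁻¹] i ≠ 0 := by
    fin_cases i
    exacts [one_ne_zero, hy 0, inv_ne_zero (hy 1)]
  have hratio (i j : Fin 3) : q * (![1, y 0, (y 1)⁻¹] i / ![1, y 0, (y 1)⁻¹] j) ∈ O := by
    fin_cases i <;> fin_cases j <;>
      simp_all [div_eq_mul_inv, mul_comm (y 1)⁻¹]
  obtain ⟨k, hk⟩ := exists_forall_div_mem O ![1, y 0, (y 1)⁻¹]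
  exact exists_isLattice_of_scale hgen hq hY hqO hy ht htinv (ha k) hk (hratio k)

end Existence

end StableLattice

section Criterion

variable {E : Type} [Field E]

theorem exists_mul_mul_eq_prod (y : Fin 3 → E) {i j : Fin 3} (hij : i ≠ j) :
    ∃ k, y i * y j * y k = y 0 * y 1 * y 2 := by
  fin_cases i <;> fin_cases j
  exacts [absurd rfl hij, ⟨2, by grind⟩, ⟨1, by grind⟩,
    ⟨2, by grind⟩, absurd rfl hij, ⟨0, by grind⟩,
    ⟨1, by grind⟩, ⟨0, by grind⟩, absurd rfl hij]

theorem mul_mul_mem_of_mul_inv_mem {O : ValuationSubring E} {q a b c : E} (hc : c ≠ 0)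
    (ht : a * b * c ∈ O) (hqc : q * c⁻¹ ∈ O) : q * (a * b) ∈ O := by
  rw [← mul_inv_cancel_right₀ hc (a * b), mul_comm _ c⁻¹, ← mul_assoc]
  exact mul_mem hqc ht

theorem mul_pair_mem {O : ValuationSubring E} {q : E} {y : Fin 3 → E} (hy : ∀ i, y i ≠ 0)
    (ht : y 0 * y 1 * y 2 ∈ O) (hqy : ∀ i, q * (y i)⁻¹ ∈ O) {i j : Fin 3} (hij : i ≠ j) :
    q * (y i * y j) ∈ O := by
  obtain ⟨k, hk⟩ := exists_mul_mul_eq_prod y hij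
  exact mul_mul_mem_of_mul_inv_mem (hy k) (hk ▸ ht) (hqy k)

theorem mul_inv_pair_mem {O : ValuationSubring E} {q : E} {y : Fin 3 → E} (hy : ∀ i, y i ≠ 0)
    (ht : (y 0 * y 1 * y 2)⁻¹ ∈ O) (hqy : ∀ i, q * y i ∈ O) {i j : Fin 3} (hij : i ≠ j) :
    q * (y i * y j)⁻¹ ∈ O := by
  rw [mul_inv]
  refine mul_pair_mem (y := fun i => (y i)⁻¹) (fun i => inv_ne_zero (hy i)) ?_ ?_ hij
  · rwa [← mul_inv, ← mul_inv]
  · exact fun i => (inv_inv (y i)).symm ▸ hqy i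

end Criterion

section PrincipalSeries

variable {E : Type} [Field E] (q : E) (y : Fin 3 → E)

open LinearMap in
/-- The action of `T`, `T⁻¹`, `S_1`, `S_2` on the principal series representation with parameters
`y`, in coordinates with respect to the basis `v`, `S_1 v`, `S_2 v`, `S_1 S_2 v`, `S_2 S_1 v`,
`S_1 S_2 S_1 v`, where `v` is an eigenvector of the `Y_i` with eigenvalues `y_i`. -/
def principalSeriesGen : Fin 4 → Module.End E (Fin 6 → E) :=
  ![pi ![(q * y 2) • proj 3, (q * y 2) • proj 5, y 1 • proj 1, y 1 • proj 4,
      (q⁻¹ * y 0) • proj 0, (q⁻¹ * y 0) • proj 2],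
    pi ![(q * (y 0)⁻¹) • proj 4, (y 1)⁻¹ • proj 2, (q * (y 0)⁻¹) • proj 5,
      (q⁻¹ * (y 2)⁻¹) • proj 0, (y 1)⁻¹ • proj 3, (q⁻¹ * (y 2)⁻¹) • proj 1],
    pi ![q • proj 1, proj 0 + (q - 1) • proj 1, q • proj 3, proj 2 + (q - 1) • proj 3,
      q • proj 5, proj 4 + (q - 1) • proj 5],
    pi ![q • proj 2, q • proj 4, proj 0 + (q - 1) • proj 2, q • proj 5,
      proj 1 + (q - 1) • proj 4, proj 3 + (q - 1) • proj 5]]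

variable {q y} (hq : q ≠ 0) (hy : ∀ i, y i ≠ 0)

include hq hy in
theorem lift_principalSeriesGen_eq_of_rel {a b : FreeAlgebra E (Fin 4)} (hab : HeckeRel E q a b) :
    FreeAlgebra.lift E (principalSeriesGen q y) a =
      FreeAlgebra.lift E (principalSeriesGen q y) b := by
  have h0 := hy 0
  have h1 := hy 1
  have h2 := hy 2
  cases hab <;> refine LinearMap.ext fun x => funext fun i => ?_ <;>
  simp only [map_mul, map_one, map_zero, map_add, map_sub, FreeAlgebra.lift_ι_apply,
    AlgHom.commutes, pow_succ, pow_zero, one_mul] <;>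
  fin_cases i <;>
  simp [principalSeriesGen] <;>
  field_simp <;> ring

/-- The principal series representation of `H_E` with parameters `y`. -/
noncomputable def principalSeries : HeckeAlg E q →ₐ[E] Module.End E (Fin 6 → E) :=
  RingQuot.liftAlgHom E ⟨FreeAlgebra.lift E (principalSeriesGen q y),
    fun _ _ => lift_principalSeriesGen_eq_of_rel hq hy⟩

theorem principalSeries_gen (i : Fin 4) :
    principalSeries hq hy (gen E q i) = principalSeriesGen q y i := by
  simp [principalSeries, gen]

theorem principalSeries_Y (i : Fin 3) :
    principalSeries hq hy (Y E q q⁻¹ i) (Pi.single 0 1) = y i • Pi.single 0 1 := by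
  refine funext fun j => ?_
  fin_cases i <;>
  simp only [Y, S1i, S2i, T, S1, S2, Fin.zero_eta, Fin.mk_one, Fin.reduceFinMk,
    Matrix.cons_val, map_mul, map_add, map_sub, map_one, principalSeries_gen, AlgHom.commutes] <;>
  fin_cases j <;>
  simp [principalSeriesGen, hq] <;>
  field_simp <;> ring

end PrincipalSeries

end HeckeAlg

theorem statement5_general {E : Type} [Field E] (O : ValuationSubring E) {q : E} (hq : q ≠ 0)
    (hqO : q ∈ O) {M : Type*} [AddCommGroup M] [Module E M] [Module (HeckeAlg E q) M]
    [IsScalarTower E (HeckeAlg E q) M] {v : M} (hv : v ≠ 0)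
    (hgen : Submodule.span (HeckeAlg E q) {v} = ⊤) {y : Fin 3 → E}
    (hY : ∀ i, HeckeAlg.Y E q q⁻¹ i • v = y i • v) :
    (∃ L : Submodule O M, L.IsLattice E ∧ ∀ h ∈ HeckeAlg.integralForm O q, ∀ x ∈ L, h • x ∈ L) ↔
      (y 0 * y 1 * y 2 ∈ O ∧ (y 0 * y 1 * y 2)⁻¹ ∈ O ∧
        ∀ i j : Fin 3, i ≠ j → q * (y i * y j) ∈ O ∧ q * (y i * y j)⁻¹ ∈ O ∧
          q * y i ∈ O ∧ q * (y i)⁻¹ ∈ O) := by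
  have hy := HeckeAlg.eigenvalue_ne_zero hq hY hv
  constructor
  · rintro ⟨L, _, hL⟩
    have ht := HeckeAlg.eigenvalue_prod_mem hL hv hq hY
    have htinv := HeckeAlg.inv_eigenvalue_prod_mem hL hv hq hY
    have hqy := HeckeAlg.q_mul_eigenvalue_mem hL hv hq hqO hY
    have hqyinv := HeckeAlg.q_mul_inv_eigenvalue_mem hL hv hq hqO hY
    exact ⟨ht, htinv, fun i j hij => ⟨HeckeAlg.mul_pair_mem hy ht hqyinv hij,
      HeckeAlg.mul_inv_pair_mem hy htinv hqy hij, hqy i, hqyinv i⟩⟩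
  · rintro ⟨ht, htinv, hpair⟩
    have hqy (i : Fin 3) := hpair i (i + 1) (by decide +revert)
    obtain ⟨h01, h01', -⟩ := hpair 0 1 Fin.zero_ne_one
    exact HeckeAlg.exists_isLattice hgen hq hY hqO hy ht htinv h01 h01' (fun i => (hqy i).2.2.1)
      fun i => (hqy i).2.2.2

theorem qE_ne_zero (p : ℕ) [Fact p.Prime] (E : Type) [Field E] [Algebra ℚ_[p] E] (f : ℕ) :
    qE p E f ≠ 0 := by
  have : CharZero E := charZero_of_injective_algebraMap (algebraMap ℚ_[p] E).injective
  exact pow_ne_zero f (Nat.cast_ne_zero.mpr (Fact.out : p.Prime).ne_zero)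

theorem ιE_gen (p : ℕ) (E : Type) [Field E] (f : ℕ) (i : Fin 4) :
    ιE p E f (HeckeAlg.gen (Polynomial ℤ) Polynomial.X i) = HeckeAlg.gen E (qE p E f) i :=
  HeckeAlg.map_gen _ _ _ i

section RingOfIntegers

variable (p : ℕ) [Fact p.Prime] (E : Type) [Field E] [Algebra ℚ_[p] E]
  [FiniteDimensional ℚ_[p] E] [Algebra ℤ_[p] E] [IsScalarTower ℤ_[p] ℚ_[p] E] (f : ℕ)

/-- `O_E` as a valuation subring of `E`. -/
noncomputable def ringOfIntegers : ValuationSubring E where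
  __ := (OE p E).toSubring
  mem_or_inv_mem' := isIntegral_or_isIntegral_inv (K := ℚ_[p]) fun x hx => ⟨⟨x, hx⟩, rfl⟩

theorem qE_mem_ringOfIntegers : qE p E f ∈ ringOfIntegers p E :=
  pow_mem (natCast_mem _ p) f

theorem ιE_mem_integralForm (h : HPoly) :
    ιE p E f h ∈ HeckeAlg.integralForm (ringOfIntegers p E) (qE p E f) := by
  refine HeckeAlg.map_mem_integralForm _ _ _ (fun P => ?_) h
  let φ : ℤ →+* ringOfIntegers p E := Int.castRingHom _
  refine ⟨P.eval₂ φ ⟨_, qE_mem_ringOfIntegers p E f⟩, ?_⟩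
  rw [Polynomial.hom_eval₂]
  congr 1

end RingOfIntegers

namespace StdMod

variable {p : ℕ} {E : Type} [Field E] {f : ℕ} (u : Fin 3 → HE p E f) (χ : AE p E f u →ₐ[E] E)

instance : IsScalarTower E (HE p E f) (StdMod p E f u χ) :=
  inferInstanceAs (IsScalarTower E (HE p E f) (HE p E f ⧸ Jχ p E f u χ))

/-- The canonical generator `1 ⊗ 1` of `I_A(χ) = H_E ⊗_{A_E, χ} E`. -/
def generator : StdMod p E f u χ := Submodule.Quotient.mk (p := Jχ p E f u χ) 1

theorem span_generator : Submodule.span (HE p E f) {generator u χ} = ⊤ := by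
  refine eq_top_iff.mpr fun x _ => Submodule.mem_span_singleton.mpr ?_
  obtain ⟨h, rfl⟩ := Submodule.Quotient.mk_surjective (Jχ p E f u χ) x
  exact ⟨h, congrArg (Submodule.Quotient.mk (p := Jχ p E f u χ)) (mul_one h)⟩

theorem smul_generator (a : AE p E f u) :
    (a : HE p E f) • generator u χ = χ a • generator u χ := by
  refine (Submodule.Quotient.eq (Jχ p E f u χ)).mpr (Submodule.subset_span ⟨a, ?_⟩)
  simp only [smul_eq_mul, mul_one, Algebra.algebraMap_eq_smul_one]

theorem Y_smul_generator (i : Fin 3) :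
    HeckeAlg.Y E (qE p E f) (qE p E f)⁻¹ i • generator u χ = yval p E f u χ i • generator u χ :=
  smul_generator u χ ⟨YE p E f i, _⟩

variable {u χ}

theorem generator_ne_zero_of_apply_eq_smul {V : Type*} [AddCommGroup V] [Module E V]
    (ρ : HE p E f →ₐ[E] Module.End E V) {w : V} (hw : w ≠ 0)
    (h : ∀ a : AE p E f u, ρ a w = χ a • w) : generator u χ ≠ 0 := by
  have hJ (x : HE p E f) (hx : x ∈ Jχ p E f u χ) : ρ x w = 0 := by
    induction hx using Submodule.span_induction with
    | mem x hx =>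
      obtain ⟨a, rfl⟩ := hx
      rw [map_sub, LinearMap.sub_apply, h, AlgHom.commutes, Module.algebraMap_end_apply, sub_self]
    | zero => rw [map_zero, LinearMap.zero_apply]
    | add x y _ _ hx hy => rw [map_add, LinearMap.add_apply, hx, hy, add_zero]
    | smul a x _ hx => rw [smul_eq_mul, map_mul, Module.End.mul_apply, hx, map_zero]
  intro h0
  have h1 := hJ 1 ((Submodule.Quotient.mk_eq_zero (Jχ p E f u χ)).mp h0)
  rw [map_one, Module.End.one_apply] at h1
  exact hw h1

theorem yval_mul_apply_eq_one (hu : ∀ i, YE p E f i * u i = 1) (i : Fin 3) :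
    yval p E f u χ i * χ ⟨u i, Algebra.subset_adjoin (Set.mem_union_right _ ⟨i, rfl⟩)⟩ = 1 := by
  rw [yval, ← map_mul, ← map_one χ]
  exact congrArg χ (Subtype.ext (hu i))

theorem generator_ne_zero (hq : qE p E f ≠ 0)
    (hu : ∀ i, YE p E f i * u i = 1 ∧ u i * YE p E f i = 1) : generator u χ ≠ 0 := by
  have hχu := yval_mul_apply_eq_one (χ := χ) fun i => (hu i).1
  have hy (i : Fin 3) : yval p E f u χ i ≠ 0 := left_ne_zero_of_mul_eq_one (hχu i)
  let ρ := HeckeAlg.principalSeries hq hy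
  have hY (i : Fin 3) : ρ (YE p E f i) (Pi.single 0 1) = yval p E f u χ i • Pi.single 0 1 :=
    HeckeAlg.principalSeries_Y hq hy i
  have hsingle : (Pi.single 0 1 : Fin 6 → E) ≠ 0 := Pi.single_ne_zero_iff.mpr one_ne_zero
  refine generator_ne_zero_of_apply_eq_smul ρ hsingle (apply_eq_smul_of_adjoin ρ χ ?_)
  rintro _ (⟨i, rfl⟩ | ⟨i, rfl⟩)
  exacts [hY i, apply_eq_smul_of_mul_eq_one ρ (hu i).2 (hχu i) (hY i)]

end StdMod

section IntegralStructure

variable {p : ℕ} [Fact p.Prime] {E : Type} [Field E] [Algebra ℚ_[p] E]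
  [FiniteDimensional ℚ_[p] E] [Algebra ℤ_[p] E] [IsScalarTower ℤ_[p] ℚ_[p] E] {f : ℕ}
  {u : Fin 3 → HE p E f} {χ : AE p E f u →ₐ[E] E}

theorem isIntegralStructure_iff {L : Submodule (ringOfIntegers p E) (StdMod p E f u χ)} :
    IsIntegralStructure p E f u χ L ↔ L.IsLattice E ∧
      ∀ h ∈ HeckeAlg.integralForm (ringOfIntegers p E) (qE p E f), ∀ x ∈ L, h • x ∈ L := by
  rw [isLattice_iff_exists_basis]
  constructor
  · rintro ⟨-, -, -, hstable, hbasis, hbasis'⟩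
    have hgen (i : Fin 4) (x : StdMod p E f u χ) (hx : x ∈ L) :
        HeckeAlg.gen E (qE p E f) i • x ∈ L := ιE_gen p E f i ▸ hstable _ x hx
    exact ⟨⟨hbasis, hbasis'⟩,
      fun h => HeckeAlg.forall_integralForm_smul_mem (hgen 0) (hgen 1) (hgen 2)⟩
  · rintro ⟨⟨hbasis, hbasis'⟩, hstable⟩
    exact ⟨L.zero_mem, fun _ hx _ hy => L.add_mem hx hy, fun c _ => L.smul_mem c,
      fun h => hstable _ (ιE_mem_integralForm p E f h), hbasis, hbasis'⟩

theorem exists_isIntegralStructure_iff :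
    (∃ L, IsIntegralStructure p E f u χ L) ↔
      ∃ L : Submodule (ringOfIntegers p E) (StdMod p E f u χ), L.IsLattice E ∧
        ∀ h ∈ HeckeAlg.integralForm (ringOfIntegers p E) (qE p E f), ∀ x ∈ L, h • x ∈ L := by
  refine ⟨fun ⟨L, hL⟩ => ?_, fun ⟨L, hL⟩ => ⟨L, isIntegralStructure_iff.mpr hL⟩⟩
  let L' : Submodule (ringOfIntegers p E) (StdMod p E f u χ) :=
    { carrier := L
      zero_mem' := hL.1
      add_mem' := fun hx hy => hL.2.1 _ hx _ hy
      smul_mem' := hL.2.2.1 }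
  exact ⟨L', isIntegralStructure_iff.mp hL⟩

end IntegralStructure

/-- For an `E`-algebra homomorphism `χ : A_E → E` with `y_i = χ(Y_i)`,
the standard module `I_A(χ) = H_E ⊗_{A_E, χ} E` admits an `O_E`-integral structure if and
only if `y_1y_2y_3` is a unit of `O_E` and, for all `1 ≤ i ≠ j ≤ 3`, the elements
`q(y_iy_j)`, `q(y_iy_j)⁻¹`, `q y_i` and `q y_i⁻¹` all lie in `O_E`. -/
theorem statement5 (p : ℕ) [Fact p.Prime] (E : Type) [Field E] [Algebra ℚ_[p] E]
    [FiniteDimensional ℚ_[p] E] [Algebra ℤ_[p] E] [IsScalarTower ℤ_[p] ℚ_[p] E]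
    (f : ℕ) (hf : 0 < f) (u : Fin 3 → HE p E f)
    (hu : ∀ i, YE p E f i * u i = 1 ∧ u i * YE p E f i = 1)
    (χ : AE p E f u →ₐ[E] E) :
    (∃ L : Set (StdMod p E f u χ), IsIntegralStructure p E f u χ L) ↔
      (yval p E f u χ 0 * yval p E f u χ 1 * yval p E f u χ 2 ∈ OE p E ∧
       (yval p E f u χ 0 * yval p E f u χ 1 * yval p E f u χ 2)⁻¹ ∈ OE p E ∧
       ∀ i j : Fin 3, i ≠ j →
         qE p E f * (yval p E f u χ i * yval p E f u χ j) ∈ OE p E ∧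
         qE p E f * (yval p E f u χ i * yval p E f u χ j)⁻¹ ∈ OE p E ∧
         qE p E f * yval p E f u χ i ∈ OE p E ∧
         qE p E f * (yval p E f u χ i)⁻¹ ∈ OE p E) :=
  exists_isIntegralStructure_iff.trans <|
    statement5_general (ringOfIntegers p E) (qE_ne_zero p E f) (qE_mem_ringOfIntegers p E f)
      (StdMod.generator_ne_zero (qE_ne_zero p E f) hu) (StdMod.span_generator u χ)
      (StdMod.Y_smul_generator u χ)
end
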